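/- arXiv:1402.2131 — 14 statements merged into one kernel-verified Lean document; each statement's English description precedes it below -/
import Mathlib

section
/- Let (X, ≤) be a locally finite poset and R a commutative ring. The Möbius function μ of X (the convolution inverse of the zeta function ξ constantly equal to 1) satisfies μ[x,x] = 1 for every x ∈ X, and for x < y, μ[x,y] = Σ_{n ≥ 1} (−1)ⁿ · cₙ(x,y), where cₙ(x,y) is the (finite) number of chains x = x₀ < x₁ < ⋯ < xₙ = y in X and the sum has finitely many nonzero terms. -/
/-!
Splitting a chain `x = x₀ < x₁ < ⋯ < x_{n+1} = y` at its second element `z = x₁` gives the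
recursion `c_{n+1}(x,y) = Σ_{x < z ≤ y} cₙ(z,y)` (`card_chains_succ`), with `c₀` the indicator of
equality. Since `Ioc z y` is strictly smaller than `Ioc x y` for `x < z ≤ y`, it follows that
`cₙ(x,y) = 0` as soon as `n > #(Ioc x y)` (`card_chains_eq_zero`). Comparing with
`μ(x,y) = -Σ_{x < z ≤ y} μ(z,y)`, an induction on a bound `N ≥ #(Ioc x y)` shows that
`μ(x,y)` is the alternating sum of the `cₙ(x,y)` over `n ≤ N` (`mu_eq_sum_card_chains`).
-/

open IncidenceAlgebra

/-- The number of chains `x = x₀ < x₁ < ⋯ < xₙ = y` in `X`, encoded as lists of length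
`n + 1` which are strictly increasing, start at `x` and end at `y`. -/
noncomputable def chainCount (X : Type*) [PartialOrder X] (x y : X) (n : ℕ) : ℕ :=
  Nat.card {l : List X // l.Chain' (· < ·) ∧ l.head? = some x ∧ l.getLast? = some y ∧
    l.length = n + 1}

section

variable {X : Type*} [PartialOrder X] [LocallyFiniteOrder X]

lemma card_Ioc_lt {x y z : X} (hz : z ∈ Finset.Ioc x y) :
    (Finset.Ioc z y).card < (Finset.Ioc x y).card := by
  apply Finset.card_lt_card
  rw [Finset.ssubset_iff_of_subset (Finset.Ioc_subset_Ioc_left (Finset.mem_Ioc.mp hz).1.le)]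
  exact ⟨z, hz, by simp⟩

variable [DecidableEq X]

/-- The finset of chains `x = x₀ < ⋯ < xₙ = y`, as lists, built by recursion on the length `n`:
a chain of length `n + 1` is `x` followed by a chain of length `n` from some `z ∈ Ioc x y`. -/
def chains : ℕ → X → X → Finset (List X)
  | 0, x, y => if x = y then {[x]} else ∅
  | n + 1, x, y => (Finset.Ioc x y).biUnion fun z => (chains n z y).image (List.cons x)

/-- `chains n x y` consists exactly of the lists counted by `chainCount X x y n`. -/
lemma mem_chains (n : ℕ) (x y : X) (l : List X) :
    l ∈ chains n x y ↔ l.IsChain (· < ·) ∧ l.head? = some x ∧ l.getLast? = some y ∧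
      l.length = n + 1 := by
  induction n generalizing x l with
  | zero =>
    rw [chains]
    constructor
    · intro h
      split_ifs at h with hxy
      · obtain rfl : l = [x] := by simpa using h
        simp [hxy]
      · simp at h
    · rintro ⟨-, h1, h2, h3⟩
      obtain ⟨a, rfl⟩ := List.length_eq_one_iff.mp h3
      simp only [List.head?_cons, Option.some.injEq] at h1
      simp only [List.getLast?_singleton, Option.some.injEq] at h2
      subst h1 h2
      simp
  | succ n ih =>
    simp only [chains, Finset.mem_biUnion, Finset.mem_image, ih, Finset.mem_Ioc]
    constructor
    · rintro ⟨z, ⟨hxz, hzy⟩, m, ⟨h1, h2, h3, h4⟩, rfl⟩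
      cases m with
      | nil => simp at h2
      | cons a m =>
        simp only [List.head?_cons, Option.some.injEq] at h2
        subst h2
        refine ⟨List.isChain_cons_cons.mpr ⟨hxz, h1⟩, rfl, ?_, by simpa using h4⟩
        rw [List.getLast?_cons_cons, h3]
    · rintro ⟨h1, h2, h3, h4⟩
      match l, h1, h2, h3, h4 with
      | a :: b :: m, h1, h2, h3, h4 =>
        simp only [List.head?_cons, Option.some.injEq] at h2
        subst h2
        rw [List.isChain_cons_cons] at h1
        rw [List.getLast?_cons_cons] at h3
        refine ⟨b, ⟨h1.1, ?_⟩, b :: m, ⟨h1.2, rfl, h3, by simpa using h4⟩, rfl⟩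
        -- the head of an increasing list is at most its last entry
        have hy : y ∈ b :: m := List.mem_of_getLast? h3
        rcases List.mem_cons.mp hy with rfl | hy
        · exact le_rfl
        · exact ((List.pairwise_cons.mp h1.2.pairwise).1 y hy).le

lemma card_chains_succ (n : ℕ) (x y : X) :
    (chains (n + 1) x y).card = ∑ z ∈ Finset.Ioc x y, (chains n z y).card := by
  rw [chains, Finset.card_biUnion]
  · exact Finset.sum_congr rfl fun z _ =>
      Finset.card_image_of_injective _ List.cons_injective
  · -- the second entry `z` of the list is determined by the list
    intro z _ w _ hzw
    refine Finset.disjoint_left.mpr ?_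
    intro l hz hw
    obtain ⟨m, hm, rfl⟩ := Finset.mem_image.mp hz
    obtain ⟨m', hm', h⟩ := Finset.mem_image.mp hw
    obtain rfl : m' = m := List.cons_injective h
    have h1 := ((mem_chains _ _ _ _).mp hm).2.1
    have h2 := ((mem_chains _ _ _ _).mp hm').2.1
    exact hzw (Option.some.inj (h1.symm.trans h2))

lemma card_chains_eq_zero (n : ℕ) (x y : X) (h : (Finset.Ioc x y).card < n) :
    (chains n x y).card = 0 := by
  induction n generalizing x with
  | zero => omega
  | succ n ih =>
    rw [card_chains_succ]
    refine Finset.sum_eq_zero fun z hz => ih z ?_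
    have := card_Ioc_lt hz
    omega

lemma chainCount_eq_card_chains (x y : X) (n : ℕ) :
    chainCount X x y n = (chains n x y).card :=
  Nat.subtype_card _ (mem_chains n x y)

lemma mu_eq_sum_card_chains (R : Type*) [CommRing R] (N : ℕ) (x y : X) (hxy : x ≤ y)
    (hN : (Finset.Ioc x y).card ≤ N) :
    mu R x y = ∑ n ∈ Finset.range (N + 1), (-1 : R) ^ n * ((chains n x y).card : R) := by
  induction N generalizing x with
  | zero =>
    have h0 : Finset.Ioc x y = ∅ := Finset.card_eq_zero.mp (by omega)
    obtain rfl : x = y := by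
      by_contra hne
      have : y ∈ Finset.Ioc x y := Finset.mem_Ioc.mpr ⟨lt_of_le_of_ne hxy hne, le_rfl⟩
      simp [h0] at this
    simp [chains]
  | succ N ih =>
    have key : ∑ n ∈ Finset.range (N + 1), (-1 : R) ^ (n + 1) * ((chains (n + 1) x y).card : R)
        = -∑ z ∈ Finset.Ioc x y, mu R z y := by
      have h1 : ∀ z ∈ Finset.Ioc x y, mu R z y =
          ∑ n ∈ Finset.range (N + 1), (-1 : R) ^ n * ((chains n z y).card : R) := fun z hz =>
        ih z (Finset.mem_Ioc.mp hz).2 (by have := card_Ioc_lt hz; omega)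
      rw [Finset.sum_congr rfl h1, Finset.sum_comm, ← Finset.sum_neg_distrib]
      refine Finset.sum_congr rfl fun n _ => ?_
      rw [card_chains_succ, Nat.cast_sum, ← Finset.mul_sum]
      ring
    rw [Finset.sum_range_succ', key]
    by_cases h : x = y
    · subst h
      simp [chains]
    · rw [mu_eq_neg_sum_Ioc_of_ne h]
      simp [chains, h]

end


/-- **Explicit formula for the Möbius function of a locally finite poset.**
The Möbius function `μ` (convolution inverse of the zeta function) satisfies `μ x x = 1`,
and for `x < y`, `μ x y = Σ_{n ≥ 1} (−1)ⁿ · cₙ(x,y)` where `cₙ(x,y)` is the (finite)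
number of chains `x = x₀ < ⋯ < xₙ = y`, only finitely many terms being nonzero. -/
theorem mu_eq_alternating_sum_chainCount
    {R : Type*} [CommRing R] {X : Type*} [PartialOrder X] [LocallyFiniteOrder X]
    [DecidableEq X] [DecidableRel ((· ≤ ·) : X → X → Prop)] :
    (zeta R * mu R : IncidenceAlgebra R X) = 1 ∧
    (mu R * zeta R : IncidenceAlgebra R X) = 1 ∧
    (∀ x : X, mu R x x = 1) ∧
    ∀ x y : X, x < y →
      (∀ n : ℕ, {l : List X | l.Chain' (· < ·) ∧ l.head? = some x ∧ l.getLast? = some y ∧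
          l.length = n + 1}.Finite) ∧
      {n : ℕ | 1 ≤ n ∧ chainCount X x y n ≠ 0}.Finite ∧
      (mu R x y : R) = ∑ᶠ n ∈ Set.Ici 1, (-1 : R) ^ n * (chainCount X x y n : R) := by

  refine ⟨zeta_mul_mu, mu_mul_zeta R X, fun x => mu_self x, fun x y hxy => ⟨fun n => ?_, ?_, ?_⟩⟩
  · exact (chains n x y).finite_toSet.subset fun l hl => (mem_chains n x y l).mpr hl
  · refine (Set.finite_Iic (Finset.Ioc x y).card).subset fun n hn => ?_
    by_contra hlt
    exact hn.2 (by rw [chainCount_eq_card_chains, card_chains_eq_zero n x y (not_le.mp hlt)])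
  · simp only [chainCount_eq_card_chains]
    rw [mu_eq_sum_card_chains R _ x y hxy.le le_rfl]
    symm
    apply finsum_mem_eq_sum_of_inter_support_eq
    ext n
    simp only [Set.mem_inter_iff, Set.mem_Ici, Function.mem_support, Finset.coe_range,
      Set.mem_Iio, and_congr_left_iff]
    intro hn
    have h1 : n ≠ 0 := by
      rintro rfl
      simp [chains, hxy.ne] at hn
    have h2 : n ≤ (Finset.Ioc x y).card := by
      by_contra hlt
      simp [card_chains_eq_zero n x y (not_le.mp hlt)] at hn
    omega
end

section
/- Let (X, ≤) and (Y, ≤) be finite posets and give X × Y the product order: (a₁,a₂) ≤ (b₁,b₂) if and only if a₁ ≤ b₁ and a₂ ≤ b₂. The natural bijection sending the interval [(a₁,a₂),(b₁,b₂)] of X × Y to the pair of intervals ([a₁,b₁],[a₂,b₂]) induces an isomorphism of R-algebras between the incidence algebra of X × Y over R and the tensor product of the incidence algebras of X and of Y over R. Moreover ξ_{X×Y}[(a₁,a₂),(b₁,b₂)] = ξ_X[a₁,b₁]·ξ_Y[a₂,b₂] and μ_{X×Y}[(a₁,a₂),(b₁,b₂)] = μ_X[a₁,b₁]·μ_Y[a₂,b₂].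 -/
/-!
The factorisations read `ξ.prod ξ = ξ` and `μ.prod μ = μ`; the second follows from the first, since
`prod` is multiplicative and inverses are unique (`mu_prod_mu`).

For the isomorphism, `(f, g) ↦ f.prod g` is bilinear, unital and multiplicative
(`prod_mul_prod`, because an interval of `X × Y` is the product of two intervals), so it induces an
algebra homomorphism on the tensor product. Every `f` in the incidence algebra of a finite poset is
the sum `∑ f[a,b] • E a b` over the indicators `E a b` of the single intervals
(`IncidenceTensor.sum_smul_single`), and `(E a b).prod (E c d)` is the indicator of
`[(a,c),(b,d)]`. Hence `F ↦ ∑ F[(a,c),(b,d)] • (E a b ⊗ E c d)` is a two-sided inverse.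
-/

open IncidenceAlgebra TensorProduct

namespace IncidenceTensor

section Single

variable {R : Type*} [CommRing R] {X Y : Type*} [PartialOrder X] [PartialOrder Y]

open Classical in
/-- The indicator function of the interval `[a, b]`, as an element of the incidence algebra.
It is `0` when `a ≤ b` fails, so that it can be summed over all pairs `a, b`. -/
noncomputable def single (R : Type*) [CommRing R] (a b : X) : IncidenceAlgebra R X where
  toFun x y := if x ≤ y ∧ x = a ∧ y = b then 1 else 0
  eq_zero_of_not_le' _ _ h := if_neg fun h' ↦ h h'.1

open Classical in
lemma single_apply (a b x y : X) :
    single R a b x y = if x ≤ y ∧ x = a ∧ y = b then 1 else 0 := rfl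

/-- Evaluation of functions in the incidence algebra at a pair, as a linear map. -/
def evalₗ (x y : X) : IncidenceAlgebra R X →ₗ[R] R where
  toFun f := f x y
  map_add' _ _ := rfl
  map_smul' _ _ := rfl

lemma sum_smul_single [Fintype X] (f : IncidenceAlgebra R X) :
    ∑ p : X × X, f p.1 p.2 • single R p.1 p.2 = f := by
  classical
  ext x y hxy
  change evalₗ x y _ = _
  rw [map_sum, Fintype.sum_eq_single (x, y)]
  · simp [evalₗ, single_apply, hxy]
  · rintro ⟨a, b⟩ h
    have : ¬ (x = a ∧ y = b) := by
      rintro ⟨rfl, rfl⟩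
      exact h rfl
    simp [evalₗ, single_apply, this]

/-- The bilinear map `(f, g) ↦ f.prod g`. -/
def prodₗ : IncidenceAlgebra R X →ₗ[R] IncidenceAlgebra R Y →ₗ[R] IncidenceAlgebra R (X × Y) :=
  LinearMap.mk₂ R (fun f g ↦ f.prod g)
    (fun f f' g ↦ by ext; simp [add_mul])
    (fun c f g ↦ by ext; simp [mul_assoc])
    (fun f g g' ↦ by ext; simp [mul_add])
    (fun c f g ↦ by ext; simp [mul_left_comm])

@[simp] lemma prodₗ_apply (f : IncidenceAlgebra R X) (g : IncidenceAlgebra R Y) :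
    prodₗ f g = f.prod g := rfl

/-- The candidate inverse of the map induced by `prodₗ`: expand `F` in the indicators of the
intervals of `X × Y`, and split each of them into a pure tensor. -/
noncomputable def splitₗ [Fintype X] [Fintype Y] :
    IncidenceAlgebra R (X × Y) →ₗ[R] IncidenceAlgebra R X ⊗[R] IncidenceAlgebra R Y :=
  ∑ p : X × X, ∑ q : Y × Y,
    (evalₗ (p.1, q.1) (p.2, q.2)).smulRight (single R p.1 p.2 ⊗ₜ[R] single R q.1 q.2)

lemma splitₗ_apply [Fintype X] [Fintype Y] (F : IncidenceAlgebra R (X × Y)) :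
    splitₗ F = ∑ p : X × X, ∑ q : Y × Y,
      F (p.1, q.1) (p.2, q.2) • (single R p.1 p.2 ⊗ₜ[R] single R q.1 q.2) := by
  simp [splitₗ, evalₗ]

lemma splitₗ_prod [Fintype X] [Fintype Y] (f : IncidenceAlgebra R X) (g : IncidenceAlgebra R Y) :
    splitₗ (f.prod g) = f ⊗ₜ[R] g := by
  conv_rhs => rw [← sum_smul_single f, ← sum_smul_single g]
  rw [splitₗ_apply, TensorProduct.sum_tmul]
  refine Finset.sum_congr rfl fun p _ ↦ ?_
  rw [TensorProduct.tmul_sum]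
  refine Finset.sum_congr rfl fun q _ ↦ ?_
  rw [TensorProduct.smul_tmul_smul, prod_mk]

lemma single_prod_single (a b : X) (c d : Y) :
    (single R a b).prod (single R c d) = single R (a, c) (b, d) := by
  classical
  ext ⟨x, y⟩ ⟨x', y'⟩ h
  obtain ⟨h₁, h₂⟩ := Prod.mk_le_mk.1 h
  simp only [prod_mk, single_apply, h, h₁, h₂, true_and, Prod.mk.injEq, ← ite_and, mul_ite,
    mul_one, mul_zero]
  congr 1
  exact propext (by tauto)

lemma lift_splitₗ [Fintype X] [Fintype Y] (F : IncidenceAlgebra R (X × Y)) :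
    TensorProduct.lift prodₗ (splitₗ F) = F := by
  conv_rhs => rw [← sum_smul_single F]
  rw [splitₗ_apply]
  simp only [map_sum, map_smul, TensorProduct.lift.tmul, prodₗ_apply, single_prod_single]
  rw [← Fintype.sum_prod_type', ← (Equiv.prodProdProdComm X Y X Y).sum_comp]
  rfl

/-- The linear isomorphism induced by `f ⊗ g ↦ f.prod g`. -/
noncomputable def tensorEquivₗ [Fintype X] [Fintype Y] :
    IncidenceAlgebra R X ⊗[R] IncidenceAlgebra R Y ≃ₗ[R] IncidenceAlgebra R (X × Y) :=
  LinearEquiv.ofLinearMap (TensorProduct.lift prodₗ) splitₗ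
    (LinearMap.ext lift_splitₗ)
    (TensorProduct.ext' fun f g ↦ by simp [splitₗ_prod])

end Single

end IncidenceTensor

/-- **Incidence algebra of a product of finite posets.**
For finite posets `X`, `Y` with the product order on `X × Y`, the natural map sending a
pure tensor `f ⊗ g` to the function `((a₁,a₂),(b₁,b₂)) ↦ f a₁ b₁ · g a₂ b₂` is an
`R`-algebra isomorphism from the tensor product of the incidence algebras of `X` and `Y`
onto the incidence algebra of `X × Y`; moreover `ξ_{X×Y}` and `μ_{X×Y}` factor as the
corresponding products of `ξ` and `μ` of the factors. -/
theorem incidenceAlgebra_prod_tensorEquiv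
    {R : Type*} [CommRing R] {X Y : Type*} [PartialOrder X] [PartialOrder Y]
    [Fintype X] [Fintype Y] [LocallyFiniteOrder X] [LocallyFiniteOrder Y]
    [DecidableEq X] [DecidableEq Y]
    [DecidableRel ((· ≤ ·) : X → X → Prop)] [DecidableRel ((· ≤ ·) : Y → Y → Prop)]
    [DecidableRel ((· ≤ ·) : X × Y → X × Y → Prop)] :
    (∃ e : (IncidenceAlgebra R X ⊗[R] IncidenceAlgebra R Y) ≃ₐ[R] IncidenceAlgebra R (X × Y),
      ∀ (f : IncidenceAlgebra R X) (g : IncidenceAlgebra R Y),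
        e (f ⊗ₜ[R] g) = f.prod g) ∧
    (∀ (a₁ b₁ : X) (a₂ b₂ : Y),
      (zeta R : IncidenceAlgebra R (X × Y)) (a₁, a₂) (b₁, b₂) =
        zeta R a₁ b₁ * zeta R a₂ b₂) ∧
    (∀ (a₁ b₁ : X) (a₂ b₂ : Y),
      (mu R : IncidenceAlgebra R (X × Y)) (a₁, a₂) (b₁, b₂) = mu R a₁ b₁ * mu R a₂ b₂) := by
  refine ⟨⟨Algebra.TensorProduct.algEquivOfLinearEquivTensorProduct
    IncidenceTensor.tensorEquivₗ ?_ ?_, ?_⟩, ?_, ?_⟩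
  · intro f₁ f₂ g₁ g₂
    exact (prod_mul_prod f₁ f₂ g₁ g₂).symm
  · exact one_prod_one
  · intro f g
    rfl
  · intro a₁ b₁ a₂ b₂
    simp only [zeta_apply, Prod.mk_le_mk, ite_and, mul_ite, mul_one, mul_zero]
    split_ifs <;> rfl
  · intro a₁ b₁ a₂ b₂
    have h := mu_prod_mu (α := X) (β := Y) R
    rw [← prod_mk, h]
    -- The two sides differ only in the `Decidable` instance for `≤` on `X × Y`, a subsingleton.
    congr!
end

section
/- Let (X, ≤) be a finite poset. Then the Euler characteristic of its order complex equals the sum of all values of its Möbius function: Σ_{n ≥ 0} (−1)ⁿ · |CₙX| = Σ_{x ≤ y in X} μ[x,y], where CₙX is the set of chains (linearly ordered subsets) of X of cardinality n+1. -/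
/-!
For `b : X` let `E b` be the sum of `(-1) ^ (|s| - 1)` over the chains `s` with greatest element `b`.
Grouping chains by their greatest element, the Euler characteristic is `∑ b, E b`, so it suffices
that `E b` equals the column sum `F b = ∑ a, μ[a, b]` for every `b`. Both functions satisfy
`∑ c ≤ b, f c = 1`, and by well-founded induction this determines `f`:

* for `E`, the sum runs over the nonempty chains below `b`. Adjoining or removing `b` is a
  sign-reversing involution on all chains below `b`, so only the correction for the empty chain
  is left (`sum_nonempty_chains_below`; geometrically, the order complex of `{c | c ≤ b}` is a cone);
* for `F`, this is `μ ⋆ ξ = 1`, summed over the left endpoint (`sum_columnMu_below`).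
-/

open IncidenceAlgebra

/-- The set of chains (linearly ordered subsets) of the poset `X` of cardinality `k`. -/
def chainsOfCard (X : Type*) [PartialOrder X] (k : ℕ) : Set (Finset X) :=
  {s : Finset X | IsChain (· ≤ ·) (s : Set X) ∧ s.card = k}

section EulerChar

open Finset
open scoped Classical

variable {X : Type*} [PartialOrder X]

lemma exists_isGreatest_of_isChain {s : Finset X} (hs : IsChain (· ≤ ·) (s : Set X))
    (hne : s.Nonempty) : ∃ b, IsGreatest (s : Set X) b := by
  obtain ⟨b, hb⟩ := s.exists_maximal hne
  refine ⟨b, hb.1, fun c hc => ?_⟩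
  rcases hs.total hc hb.1 with h | h
  · exact h
  · exact hb.2 hc h

variable [Fintype X]

/-- The signed count of the chains with greatest element `b`, where a chain `s` has sign
`(-1) ^ (|s| - 1)`, written with exponent `|s| + 1` to avoid truncated subtraction. -/
noncomputable def signedChainsTo (b : X) : ℤ :=
  ∑ s ∈ (univ.filter fun s : Finset X => IsChain (· ≤ ·) (s : Set X) ∧ IsGreatest (s : Set X) b), (-1) ^ (s.card + 1)

/-- Grouping the nonempty chains of a lower set by their greatest element. -/
lemma sum_signedChainsTo (D : Finset X) (hD : IsLowerSet (D : Set X)) :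
    ∑ b ∈ D, signedChainsTo b =
      ∑ s ∈ (univ.filter fun s : Finset X => IsChain (· ≤ ·) (s : Set X) ∧ s ⊆ D ∧ s.Nonempty),
        (-1 : ℤ) ^ (s.card + 1) := by
  unfold signedChainsTo
  rw [Finset.sum_comm' (t' := univ.filter fun s : Finset X =>
        IsChain (· ≤ ·) (s : Set X) ∧ s ⊆ D ∧ s.Nonempty)
      (s' := fun s => univ.filter fun b => IsGreatest (s : Set X) b)]
  · refine Finset.sum_congr rfl fun s hs => ?_
    simp only [mem_filter, mem_univ, true_and] at hs
    obtain ⟨b, hb⟩ := exists_isGreatest_of_isChain hs.1 hs.2.2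
    have : (univ.filter fun b => IsGreatest (s : Set X) b) = {b} := by
      ext c
      simp only [mem_filter, mem_univ, true_and, mem_singleton]
      exact ⟨fun h => h.unique hb, fun h => h ▸ hb⟩
    rw [this, sum_singleton]
  · intro b s
    simp only [mem_filter, mem_univ, true_and]
    constructor
    · rintro ⟨hb, hs, hg⟩
      exact ⟨hg, hs, fun c hc => hD (hg.2 hc) hb, ⟨b, hg.1⟩⟩
    · rintro ⟨hg, hs, hsub, -⟩
      exact ⟨hsub hg.1, hs, hg⟩

lemma sum_nonempty_chains_below (b : X) :
    ∑ s ∈ (univ.filter fun s : Finset X => IsChain (· ≤ ·) (s : Set X) ∧ s ⊆ univ.filter (· ≤ b) ∧ s.Nonempty),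
        (-1 : ℤ) ^ (s.card + 1) = 1 := by
  -- The involution on chains below `b`, the empty chain included.
  have key : ∑ s ∈ (univ.filter fun s : Finset X => IsChain (· ≤ ·) (s : Set X) ∧ s ⊆ univ.filter (· ≤ b)),
      (-1 : ℤ) ^ (s.card + 1) = 0 := by
    refine Finset.sum_involution
      (fun s _ => if b ∈ s then s.erase b else insert b s) ?_ ?_ ?_ ?_
    · intro s _
      by_cases h : b ∈ s
      · have := card_erase_add_one h
        simp only [h, if_true]
        rw [← this]
        ring
      · simp only [h, if_false, card_insert_of_notMem h]
        ring
    · intro s _ _ heq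
      by_cases h : b ∈ s
      · simp only [h, if_true] at heq
        rw [← heq] at h
        simp at h
      · simp only [h, if_false] at heq
        exact h (heq ▸ mem_insert_self b s)
    · intro s hs
      simp only [mem_filter, mem_univ, true_and] at hs ⊢
      have hle : ∀ c ∈ s, c ≤ b := fun c hc => by simpa using hs.2 hc
      split_ifs with h
      · exact ⟨hs.1.mono (by simp), (erase_subset _ _).trans hs.2⟩
      · refine ⟨?_, insert_subset (by simp) hs.2⟩
        rw [coe_insert]
        exact hs.1.insert fun c hc _ => Or.inr (hle c hc)
    · intro s _
      by_cases h : b ∈ s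
      · simp [h, insert_erase]
      · simp [h]
  have hsplit : (univ.filter fun s : Finset X =>
      IsChain (· ≤ ·) (s : Set X) ∧ s ⊆ univ.filter (· ≤ b)) =
      insert ∅ (univ.filter fun s : Finset X =>
        IsChain (· ≤ ·) (s : Set X) ∧ s ⊆ univ.filter (· ≤ b) ∧ s.Nonempty) := by
    ext s
    rcases s.eq_empty_or_nonempty with rfl | h
    · simp
    · simp [h, h.ne_empty]
  rw [hsplit, sum_insert (by simp)] at key
  simp only [card_empty, zero_add, pow_one] at key
  linarith

lemma sum_columnMu_below [LocallyFiniteOrder X] [DecidableEq X] (b : X) :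
    ∑ c : X with c ≤ b, ∑ a : X, mu ℤ a c = 1 := by
  rw [Finset.sum_comm]
  have h : ∀ a : X, ∑ c : X with c ≤ b, mu ℤ a c = if a = b then 1 else 0 := fun a => by
    rw [← sum_Icc_mu_right a b]
    symm
    refine Finset.sum_subset (fun c hc => by simpa using (mem_Icc.1 hc).2) fun c hc hc' => ?_
    refine apply_eq_zero_of_not_le (fun hac => hc' ?_) _
    exact mem_Icc.2 ⟨hac, by simpa using hc⟩
  simp [h]

/-- A function on a finite poset is determined by its sums over principal lower sets. -/
lemma eq_of_sum_below_eq {f g : X → ℤ}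
    (h : ∀ b, ∑ c : X with c ≤ b, f c = ∑ c : X with c ≤ b, g c) (b : X) : f b = g b := by
  induction b using WellFoundedLT.induction with
  | ind b ih =>
    have hs : (univ.filter fun c : X => c ≤ b) = insert b (univ.filter fun c => c < b) := by
      ext c
      simp [le_iff_eq_or_lt]
    have hb := h b
    rw [hs, sum_insert (by simp), sum_insert (by simp),
      Finset.sum_congr rfl fun c hc => ih c (by simpa using hc)] at hb
    exact add_right_cancel hb

lemma signedChainsTo_eq_columnMu [LocallyFiniteOrder X] [DecidableEq X] (b : X) :
    signedChainsTo b = ∑ a : X, mu ℤ a b := by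
  refine eq_of_sum_below_eq (f := signedChainsTo) (g := fun b => ∑ a : X, mu ℤ a b)
    (fun b => ?_) b
  rw [sum_columnMu_below, sum_signedChainsTo, sum_nonempty_chains_below]
  intro c d hdc hc
  simp only [coe_filter, mem_univ, true_and, Set.mem_ofPred_eq] at hc ⊢
  exact hdc.trans hc

lemma finsum_chainsOfCard :
    ∑ᶠ n : ℕ, (-1 : ℤ) ^ n * (Nat.card (chainsOfCard X (n + 1)) : ℤ) =
      ∑ s ∈ (univ.filter fun s : Finset X => IsChain (· ≤ ·) (s : Set X) ∧ s ⊆ univ ∧ s.Nonempty),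
        (-1 : ℤ) ^ (s.card + 1) := by
  have hcard : ∀ k, Nat.card (chainsOfCard X k) =
      (univ.filter fun s : Finset X => IsChain (· ≤ ·) (s : Set X) ∧ s.card = k).card := fun k => by
    rw [← Nat.card_eq_finsetCard]
    exact Nat.card_congr (Equiv.subtypeEquivRight fun s => by simp [chainsOfCard])
  rw [finsum_eq_sum_of_support_subset (s := range (Fintype.card X))]
  · rw [← Finset.sum_fiberwise_of_maps_to (t := range (Fintype.card X))
      (g := fun s : Finset X => s.card - 1)]
    · refine Finset.sum_congr rfl fun n _ => ?_
      have hfilter : ((univ.filter fun s : Finset X =>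
          IsChain (· ≤ ·) (s : Set X) ∧ s ⊆ univ ∧ s.Nonempty).filter fun s => s.card - 1 = n) =
          univ.filter fun s : Finset X => IsChain (· ≤ ·) (s : Set X) ∧ s.card = n + 1 := by
        ext s
        simp only [mem_filter, mem_univ, true_and, subset_univ, ← card_pos]
        grind
      rw [hfilter, hcard, Finset.sum_congr rfl (g := fun _ => (-1 : ℤ) ^ n)]
      · simp [mul_comm]
      · intro s hs
        rw [(mem_filter.1 hs).2.2]
        ring
    · intro s hs
      have h1 := card_pos.2 (mem_filter.1 hs).2.2.2
      have h2 := card_le_univ s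
      rw [mem_range]
      omega
  · intro n hn
    by_contra hlt
    apply hn
    have hempty : (univ.filter fun s : Finset X =>
        IsChain (· ≤ ·) (s : Set X) ∧ s.card = n + 1) = ∅ := by
      refine filter_eq_empty_iff.2 fun s _ hs => hlt ?_
      have h2 := card_le_univ s
      simp only [coe_range, Set.mem_Iio]
      omega
    simp only [hcard, hempty, card_empty, Nat.cast_zero, mul_zero]

end EulerChar

/-- **Euler characteristic of the order complex equals the sum of the Möbius function.**
For a finite poset `X`, `Σ_{n ≥ 0} (−1)ⁿ · |CₙX| = Σ_{x ≤ y} μ[x,y]`, where `CₙX` is the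
set of chains of `X` of cardinality `n + 1`. -/
theorem euler_char_eq_sum_mu
    {X : Type*} [PartialOrder X] [Fintype X] [LocallyFiniteOrder X] [DecidableEq X]
    [DecidableRel ((· ≤ ·) : X → X → Prop)] :
    ∑ᶠ n : ℕ, (-1 : ℤ) ^ n * (Nat.card (chainsOfCard X (n + 1)) : ℤ) =
      ∑ x : X, ∑ y : X, if x ≤ y then mu ℤ x y else 0 := by
  rw [finsum_chainsOfCard,
    ← sum_signedChainsTo Finset.univ (by simpa using isLowerSet_univ), Finset.sum_comm]
  refine Finset.sum_congr rfl fun b _ => ?_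
  rw [signedChainsTo_eq_columnMu]
  refine Finset.sum_congr rfl fun a _ => ?_
  split_ifs with h
  · rfl
  · exact apply_eq_zero_of_not_le h _
end

section
/- Let (X, ≤) be a finite poset and let X̄ be the poset obtained from X by adjoining a new minimum element 0̂ and a new maximum element 1̂. Then the value of the Möbius function of X̄ on the full interval equals the reduced Euler characteristic of the order complex of X: μ_{X̄}[0̂,1̂] = Σ_{n ≥ −1} (−1)ⁿ · |CₙX|, where CₙX is the set of chains of X of cardinality n+1 (so C₋₁X consists only of the empty chain). -/
/-!
The proof goes through Philip Hall's theorem: in a locally finite poset, for `a < b`,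
`μ[a,b] = -∑ (-1)^|s|`, the sum running over the chains `s` of the open interval `(a,b)`
(`mu_eq_neg_sum_chainsIoo`). A nonempty chain of `(a,b)` is uniquely `insert x t`, where `x` is its
greatest element and `t` is a chain of `(a,x)`; hence the alternating sum satisfies the recursion
`μ[a,b] = -∑_{a ≤ x < b} μ[a,x]` defining the Möbius function, the empty chain accounting for
the term `x = a`.

In `X̄` the open interval `(0̂,1̂)` is a copy of `X`, so its chains are the chains of `X`; grouping
these by cardinality gives the reduced Euler characteristic.
-/

open IncidenceAlgebra

instance fintypeWithBotWithTop (X : Type*) [Fintype X] : Fintype (WithBot (WithTop X)) :=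
  inferInstanceAs (Fintype (Option (Option X)))

attribute [local instance] Fintype.toLocallyFiniteOrder

open Finset in
open scoped Classical in
/-- The chains of the open interval `(a, b)`, the empty chain included. -/
noncomputable def chainsIoo {α : Type*} [PartialOrder α] [LocallyFiniteOrder α] (a b : α) :
    Finset (Finset α) :=
  {s ∈ (Ioo a b).powerset | IsChain (· ≤ ·) (s : Set α)}

lemma mem_chainsIoo {α : Type*} [PartialOrder α] [LocallyFiniteOrder α] {a b : α}
    {s : Finset α} :
    s ∈ chainsIoo a b ↔ (∀ x ∈ s, a < x ∧ x < b) ∧ IsChain (· ≤ ·) (s : Set α) := by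
  simp [chainsIoo, Finset.subset_iff]

open Finset in
open scoped Classical in
/-- Splitting off the greatest element of a nonempty chain. -/
lemma sum_chainsIoo {α : Type*} [PartialOrder α] [LocallyFiniteOrder α] (a b : α) :
    ∑ s ∈ chainsIoo a b, (-1 : ℤ) ^ #s =
      1 + ∑ x ∈ Ioo a b, -∑ t ∈ chainsIoo a x, (-1 : ℤ) ^ #t := by
  have h0 : (∅ : Finset α) ∈ chainsIoo a b := by simp [mem_chainsIoo]
  rw [← add_sum_erase _ _ h0]
  simp only [card_empty, pow_zero, add_right_inj, ← sum_neg_distrib]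
  rw [sum_sigma']
  symm
  refine sum_bij (fun p _ => insert p.1 p.2) ?_ ?_ ?_ ?_
  · rintro ⟨x, t⟩ h
    simp only [mem_sigma, mem_Ioo, mem_chainsIoo] at h
    obtain ⟨⟨hax, hxb⟩, ht, hc⟩ := h
    simp only [mem_erase, mem_chainsIoo, mem_insert, coe_insert]
    refine ⟨insert_ne_empty _ _, ?_, hc.insert fun y hy _ => Or.inr (ht y hy).2.le⟩
    rintro y (rfl | hy)
    · exact ⟨hax, hxb⟩
    · exact ⟨(ht y hy).1, (ht y hy).2.trans hxb⟩
  · rintro ⟨x, t⟩ h ⟨y, u⟩ h' e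
    simp only [mem_sigma, mem_Ioo, mem_chainsIoo] at h h'
    dsimp only at e
    -- Each of `x`, `y` is the greatest element of the common chain.
    have hxy : x = y := by
      have h1 : x ∈ insert y u := e ▸ mem_insert_self x t
      have h2 : y ∈ insert x t := e ▸ mem_insert_self y u
      rcases mem_insert.1 h1 with h1 | h1
      · exact h1
      rcases mem_insert.1 h2 with h2 | h2
      · exact h2.symm
      exact absurd ((h'.2.1 x h1).2.trans (h.2.1 y h2).2) (lt_irrefl _)
    subst hxy
    have hx : x ∉ t := fun hx => lt_irrefl _ (h.2.1 x hx).2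
    have hx' : x ∉ u := fun hx => lt_irrefl _ (h'.2.1 x hx).2
    rw [← erase_insert hx, e, erase_insert hx']
  · intro s hs
    simp only [mem_erase, mem_chainsIoo] at hs
    obtain ⟨hne, hs, hc⟩ := hs
    obtain ⟨x, hx⟩ := s.exists_maximal (nonempty_iff_ne_empty.2 hne)
    refine ⟨⟨x, s.erase x⟩, ?_, insert_erase hx.prop⟩
    simp only [mem_sigma, mem_Ioo, mem_chainsIoo, mem_erase]
    refine ⟨hs x hx.prop, fun y hy => ⟨(hs y hy.2).1, ?_⟩, hc.mono (by simp)⟩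
    rcases hc.total hy.2 hx.prop with h | h
    · exact lt_of_le_of_ne h hy.1
    · exact lt_of_le_of_ne (hx.le_of_ge hy.2 h) hy.1
  · rintro ⟨x, t⟩ h
    simp only [mem_sigma, mem_Ioo, mem_chainsIoo] at h
    have hx : x ∉ t := fun hx => lt_irrefl _ (h.2.1 x hx).2
    simp [card_insert_of_notMem hx, pow_succ]

open Finset in
/-- Philip Hall's theorem. -/
lemma mu_eq_neg_sum_chainsIoo {α : Type*} [PartialOrder α] [LocallyFiniteOrder α]
    [DecidableEq α] (a b : α) (hab : a < b) :
    mu ℤ a b = -∑ s ∈ chainsIoo a b, (-1 : ℤ) ^ #s := by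
  induction hn : #(Ioo a b) using Nat.strong_induction_on generalizing b with
  | _ n ih =>
  subst hn
  rw [mu_eq_neg_sum_Ico_of_ne hab.ne, ← Ioo_insert_left hab, sum_insert (by simp), mu_self,
    sum_chainsIoo]
  congr 2
  refine sum_congr rfl fun x hx => ?_
  obtain ⟨hax, hxb⟩ := mem_Ioo.1 hx
  refine ih _ (card_lt_card ?_) x hax rfl
  refine ⟨Ioo_subset_Ioo_right hxb.le, fun h => ?_⟩
  exact lt_irrefl x (mem_Ioo.1 (h hx)).2

open scoped Classical in
/-- The chains of `X`, the empty chain included. -/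
noncomputable def chainsFinset (X : Type*) [PartialOrder X] [Fintype X] : Finset (Finset X) :=
  {s : Finset X | IsChain (· ≤ ·) (s : Set X)}

lemma mem_chainsFinset {X : Type*} [PartialOrder X] [Fintype X] {s : Finset X} :
    s ∈ chainsFinset X ↔ IsChain (· ≤ ·) (s : Set X) := by
  simp [chainsFinset]

open Finset in
/-- The chains of `(0̂, 1̂)` are the images of the chains of `X`. -/
lemma sum_chainsIoo_bot_top {X : Type*} [PartialOrder X] [Fintype X]
    [LocallyFiniteOrder (WithBot (WithTop X))] :
    ∑ s ∈ chainsIoo (⊥ : WithBot (WithTop X)) ⊤, (-1 : ℤ) ^ #s =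
      ∑ s ∈ chainsFinset X, (-1 : ℤ) ^ #s := by
  let e : X ↪o WithBot (WithTop X) := WithTop.coeOrderHom.trans WithBot.coeOrderHom
  have he : ∀ x, ⊥ < e x ∧ e x < ⊤ := fun x =>
    ⟨WithBot.bot_lt_coe _, WithBot.coe_lt_coe.2 (WithTop.coe_lt_top x)⟩
  have he' : ∀ y : WithBot (WithTop X), ⊥ < y → y < ⊤ → ∃ x, e x = y := by
    intro y h1 h2
    induction y with
    | bot => exact absurd h1 (lt_irrefl _)
    | coe y =>
      induction y with
      | top => exact absurd h2 (lt_irrefl _)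
      | coe x => exact ⟨x, rfl⟩
  symm
  refine sum_bij (fun s _ => s.map e.toEmbedding) ?_ ?_ ?_ ?_
  · intro s hs
    rw [mem_chainsFinset] at hs
    refine mem_chainsIoo.2 ⟨?_, ?_⟩
    · intro y hy
      obtain ⟨x, -, rfl⟩ := mem_map.1 hy
      exact he x
    · rw [coe_map]
      rintro _ ⟨x, hx, rfl⟩ _ ⟨y, hy, rfl⟩ -
      exact (hs.total hx hy).imp (fun h => e.monotone h) (fun h => e.monotone h)
  · intro s _ t _ h
    exact map_injective _ h
  · intro s hs
    obtain ⟨h1, h2⟩ := mem_chainsIoo.1 hs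
    refine ⟨s.preimage e e.injective.injOn, ?_, ?_⟩
    · rw [mem_chainsFinset]
      intro x hx y hy hxy
      have := h2 (mem_preimage.1 hx) (mem_preimage.1 hy) (e.injective.ne hxy)
      simpa using this
    · ext y
      simp only [mem_map, mem_preimage]
      constructor
      · rintro ⟨x, hx, rfl⟩
        exact hx
      · intro hy
        obtain ⟨x, rfl⟩ := he' y (h1 y hy).1 (h1 y hy).2
        exact ⟨x, hy, rfl⟩
  · intro s _
    simp

open Finset in
open scoped Classical in
lemma finsum_card_chains {X : Type*} [PartialOrder X] [Fintype X] :
    ∑ᶠ k : ℕ, -((-1 : ℤ) ^ k) * (Nat.card (chainsOfCard X k) : ℤ) =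
      -∑ s ∈ chainsFinset X, (-1 : ℤ) ^ #s := by
  have hcard : ∀ k, Nat.card (chainsOfCard X k) =
      #{s ∈ chainsFinset X | #s = k} := by
    intro k
    refine Nat.subtype_card _ fun s => ?_
    rw [mem_filter, mem_chainsFinset]
    rfl
  rw [finsum_eq_sum_of_support_subset (s := range (Fintype.card X + 1))]
  · rw [← sum_fiberwise_of_maps_to (t := range (Fintype.card X + 1)) (g := fun s => #s)
      (fun s _ => mem_range.2 (Nat.lt_succ_of_le (card_le_univ s))), ← sum_neg_distrib]
    refine sum_congr rfl fun k _ => ?_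
    rw [hcard, sum_congr rfl (g := fun _ => (-1 : ℤ) ^ k)
      (fun s hs => by rw [(mem_filter.1 hs).2])]
    rw [sum_const, nsmul_eq_mul]
    ring
  · intro k hk
    by_contra h
    refine hk ?_
    -- No subset of `X` has more than `|X|` elements.
    have hempty : #{s ∈ chainsFinset X | #s = k} = 0 := by
      rw [card_eq_zero, filter_eq_empty_iff]
      rintro s - rfl
      exact h (by simpa using Nat.lt_succ_of_le (card_le_univ s))
    simp only [hcard, hempty, Nat.cast_zero, mul_zero]

/-- **Möbius function of `X̄ = X ∪ {0̂, 1̂}` and the reduced Euler characteristic.**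
For a finite poset `X`, with `X̄ = WithBot (WithTop X)` the poset obtained by adjoining a
bottom element `0̂` and a top element `1̂`, one has
`μ_{X̄}[0̂,1̂] = Σ_{n ≥ −1} (−1)ⁿ · |CₙX|`, the sum over chains being reindexed by the
cardinality `k = n + 1`, so that the term of a chain of cardinality `k` is
`(−1)^{k−1} = −(−1)^k`; the `k = 0` term accounts for the empty chain, the unique element
of `C₋₁X`. -/
theorem mu_bot_top_eq_reduced_euler_char
    {X : Type*} [PartialOrder X] [Fintype X] [DecidableEq X]
    [DecidableRel ((· ≤ ·) : X → X → Prop)] [DecidableRel ((· < ·) : X → X → Prop)] :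
    mu ℤ (⊥ : WithBot (WithTop X)) (⊤ : WithBot (WithTop X)) =
      ∑ᶠ k : ℕ, -((-1 : ℤ) ^ k) * (Nat.card (chainsOfCard X k) : ℤ) := by
  rw [mu_eq_neg_sum_chainsIoo _ _ (WithBot.bot_lt_coe _), sum_chainsIoo_bot_top, finsum_card_chains]
end

section
/- Let X be a finite set, R a commutative ring, and f : X × X → R a map that is invertible in the matrix algebra [X × X, R] and transitive, meaning that for every n ≥ 0 and all x₀, x₁, …, xₙ ∈ X, f(x₀,xₙ) = 0 implies f(x₀,x₁)·f(x₁,x₂)⋯f(x_{n−1},xₙ) = 0. Then for all x, y ∈ X, f(x,y) = 0 implies f⁻¹(x,y) = 0. -/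
/-!
By the Cayley–Hamilton theorem, the inverse of an invertible matrix `f` is a polynomial in `f`:
the constant coefficient of `f.charpoly` is `± det f`, which is a unit. So it is enough that
`f x y = 0` forces `(f ^ n) x y = 0` for every `n`. The entry `(f ^ n) x y` is the sum of the
products of `f` along all paths of length `n` from `x` to `y`, and transitivity says that each of
these products vanishes.
-/

/-- A matrix `f : X × X → R` is transitive if for every `n ≥ 0` and all
`x₀, …, xₙ ∈ X`, `f x₀ xₙ = 0` implies `f x₀ x₁ · f x₁ x₂ ⋯ f x_{n−1} xₙ = 0`. -/
def MatrixTransitive {X : Type*} {R : Type*} [CommRing R] (f : Matrix X X R) : Prop :=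
  ∀ (n : ℕ) (x : Fin (n + 1) → X), f (x 0) (x (Fin.last n)) = 0 →
    ∏ i : Fin n, f (x i.castSucc) (x i.succ) = 0

/-- An entry of `f ^ n` vanishes once all path products of length `n` between its indices do. The
factor `r` carries the product over the initial part of a path, which makes the induction on `n`
go through. -/
theorem mul_pow_apply_eq_zero_of_paths {X R : Type*} [Fintype X] [DecidableEq X] [CommRing R]
    (f : Matrix X X R) (b : X) (n : ℕ) : ∀ (r : R) (a : X),
    (∀ x : Fin (n + 1) → X, x 0 = a → x (Fin.last n) = b →
      r * ∏ i : Fin n, f (x i.castSucc) (x i.succ) = 0) → r * (f ^ n) a b = 0 := by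
  induction n with
  | zero =>
    intro r a h
    by_cases hab : a = b
    · subst hab
      simpa using h (fun _ => a) rfl rfl
    · simp [hab]
  | succ n ih =>
    intro r a h
    rw [pow_succ', Matrix.mul_apply, Finset.mul_sum]
    refine Finset.sum_eq_zero fun c _ => ?_
    rw [← mul_assoc]
    refine ih (r * f a c) c fun x h0 hl => ?_
    -- Prepend the step from `a` to `c` to the path `x`.
    have key := h (Fin.cons a x) rfl (by rw [← Fin.succ_last, Fin.cons_succ, hl])
    rw [Fin.prod_univ_succ] at key
    simpa [h0, mul_assoc, ← Fin.succ_castSucc] using key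

theorem MatrixTransitive.pow_apply_eq_zero {X R : Type*} [Fintype X] [DecidableEq X] [CommRing R]
    {f : Matrix X X R} (hf : MatrixTransitive f) {a b : X} (h : f a b = 0) (n : ℕ) :
    (f ^ n) a b = 0 := by
  have := mul_pow_apply_eq_zero_of_paths f b n 1 a fun x h0 hl => by
    rw [hf n x (by rw [h0, hl, h]), mul_zero]
  simpa using this

theorem exists_inv_eq_aeval {X R : Type*} [Fintype X] [DecidableEq X] [CommRing R]
    (f : Matrix X X R) (hunit : IsUnit f) :
    ∃ p : Polynomial R, f⁻¹ = Polynomial.aeval f p := by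
  have hdet : IsUnit f.det := (Matrix.isUnit_iff_isUnit_det f).mp hunit
  have hc : IsUnit (f.charpoly.coeff 0) := by
    rw [Matrix.det_eq_sign_charpoly_coeff] at hdet
    exact isUnit_of_mul_isUnit_right hdet
  obtain ⟨d, hd⟩ := hc.exists_left_inv
  have hch := Matrix.aeval_self_charpoly f
  -- With `charpoly = q * X + c`, Cayley–Hamilton reads `q(f) * f = -c`.
  rw [← Polynomial.divX_mul_X_add f.charpoly] at hch
  refine ⟨Polynomial.C (-d) * f.charpoly.divX, Matrix.inv_eq_left_inv ?_⟩
  simp only [map_add, map_mul, Polynomial.aeval_X, Polynomial.aeval_C] at hch ⊢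
  rw [mul_assoc, eq_neg_of_add_eq_zero_left hch, ← map_neg, ← map_mul, neg_mul_neg, hd, map_one]

/-- **(Leinster)** If `f` is an invertible transitive matrix over a commutative ring,
then `f x y = 0` implies `f⁻¹ x y = 0`. -/
theorem inv_apply_eq_zero_of_transitive_of_apply_eq_zero
    {X : Type*} [Fintype X] [DecidableEq X] {R : Type*} [CommRing R]
    (f : Matrix X X R) (hunit : IsUnit f) (htrans : MatrixTransitive f) :
    ∀ x y : X, f x y = 0 → f⁻¹ x y = 0 := by
  intro x y hxy
  obtain ⟨p, hp⟩ := exists_inv_eq_aeval f hunit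
  rw [hp, Polynomial.aeval_eq_sum_range, Matrix.sum_apply]
  refine Finset.sum_eq_zero fun n _ => ?_
  rw [Matrix.smul_apply, htrans.pow_apply_eq_zero hxy, smul_zero]
end

section
/- Let (X, ≤) be a finite poset, R a commutative ring, and f : X × X → R a transitive map with f(x,y) = 0 whenever x ≰ y. Then f is invertible in the incidence algebra of X (i.e., f has a two-sided inverse that also vanishes on pairs (x,y) with x ≰ y) if and only if f is invertible in the full matrix algebra [X × X, R]. -/
/-- **(Leinster)** For a finite poset `X` and a transitive map `f` supported on the
relation `≤` (i.e. an element of the incidence algebra of `X`), `f` is invertible in the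
incidence algebra — it has a two-sided inverse also supported on `≤` — if and only if `f`
is invertible in the full matrix algebra `[X × X, R]`. -/
theorem incidence_invertible_iff_matrix_invertible
    {X : Type*} [Fintype X] [DecidableEq X] [PartialOrder X] {R : Type*} [CommRing R]
    (f : Matrix X X R) (htrans : MatrixTransitive f)
    (hsupp : ∀ x y : X, ¬x ≤ y → f x y = 0) :
    (∃ g : Matrix X X R, (∀ x y : X, ¬x ≤ y → g x y = 0) ∧ f * g = 1 ∧ g * f = 1) ↔
      IsUnit f := by
  classical
  constructor
  · rintro ⟨g, -, hfg, hgf⟩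
    exact ⟨⟨f, g, hfg, hgf⟩, rfl⟩
  · intro hf
    have hdet : IsUnit f.det := (Matrix.isUnit_iff_isUnit_det f).mp hf
    refine ⟨f⁻¹, fun x y hxy => ?_, Matrix.mul_nonsing_inv f hdet, Matrix.nonsing_inv_mul f hdet⟩
    have : Invertible f := hf.invertible
    have hblock : f.BlockTriangular (fun z => if x ≤ z then (1 : ℕ) else 0) := by
      intro i j hij
      apply hsupp
      intro hle
      by_cases hi : x ≤ i
      · simp [hi, hi.trans hle] at hij
      · simp [hi] at hij
    exact Matrix.blockTriangular_inv_of_blockTriangular hblock (by simp [hxy])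
end

section
/- Let (X, E) be a reflexive directed graph (a type X with a family of edge sets E(x,y) and E(x,x) nonempty for all x) that is locally finite, i.e., E(x,x) is finite for all x and the set W(x,y) of walks from x to y is finite for all x, y, where a walk is a finite nonempty composable sequence of edges e₁, …, eₙ with target(eᵢ) = source(e_{i+1}) and source(eᵢ) ≠ target(eᵢ) for each i, beginning at x and ending at y. Then the relation on X defined by x ≤ y if and only if x = y or there exists a walk from x to y is a partial order, and the poset (X, ≤) is locally finite (every interval {z : x ≤ z ≤ y} is finite). -/
/-!
The point is that walks can be concatenated: `GraphWalk.exists_append` produces, from walks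
`x → z` and `z → y`, a walk `x → y` that passes through every vertex of the second one and
whose length is the sum of the two lengths.

This gives transitivity. If `x ≠ y` were related in both directions, there would be a closed
walk at `x`, and iterating it would give closed walks of unbounded length, contradicting the
finiteness of `W(x, x)`; this is antisymmetry. Finally, any `z` strictly between `x` and `y` is
a vertex of a walk `x → y`, and finitely many walks visit only finitely many vertices.
-/

/-- A walk in the directed graph with vertex type `X` and edge family `E`: a nonempty
composable sequence of `n + 1` edges `e₀, …, eₙ` visiting the vertices
`v 0, …, v (n+1)`, with `source eᵢ ≠ target eᵢ` for each `i`, beginning at `x = v 0`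
and ending at `y = v (n+1)`. -/
structure GraphWalk (X : Type*) (E : X → X → Type*) (x y : X) where
  n : ℕ
  v : Fin (n + 2) → X
  e : ∀ i : Fin (n + 1), E (v i.castSucc) (v i.succ)
  source_ne_target : ∀ i : Fin (n + 1), v i.castSucc ≠ v i.succ
  first : v 0 = x
  last : v (Fin.last (n + 1)) = y

namespace GraphWalk

/-- Prepending an edge between distinct vertices to a walk. -/
theorem exists_cons {X : Type*} {E : X → X → Type*} {x z y : X} (f : E x z) (hne : x ≠ z)
    (q : GraphWalk X E z y) :
    ∃ r : GraphWalk X E x y, r.n = q.n + 1 ∧ Set.range q.v ⊆ Set.range r.v := by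
  obtain ⟨n, v, e, h, rfl, rfl⟩ := q
  refine ⟨⟨n + 1, Fin.cons x v, Fin.cases f e, Fin.cases hne h, rfl, rfl⟩, rfl, ?_⟩
  rintro _ ⟨i, rfl⟩
  exact ⟨i.succ, rfl⟩

/-- Concatenation of walks. Since the field `n` is one less than the number of edges, adding
lengths amounts to `r.n = p.n + q.n + 1`. -/
theorem exists_append {X : Type*} {E : X → X → Type*} {x z y : X} (p : GraphWalk X E x z)
    (q : GraphWalk X E z y) :
    ∃ r : GraphWalk X E x y, r.n = p.n + q.n + 1 ∧ Set.range q.v ⊆ Set.range r.v := by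
  obtain ⟨n, v, e, h, rfl, rfl⟩ := p
  induction n with
  | zero =>
    obtain ⟨r, hr, hs⟩ := exists_cons (e 0) (h 0) q
    exact ⟨r, by simpa using hr, hs⟩
  | succ n ih =>
    obtain ⟨r, hr, hs⟩ := ih (fun i => v i.succ) (fun i => e i.succ) (fun i => h i.succ) q
    obtain ⟨r', hr', hs'⟩ := exists_cons (e 0) (h 0) r
    refine ⟨r', ?_, hs.trans hs'⟩
    simp only at hr ⊢
    omega

/-- A closed walk can be iterated to give arbitrarily long closed walks at the same vertex. -/
theorem exists_long {X : Type*} {E : X → X → Type*} {x : X} (p : GraphWalk X E x x) (k : ℕ) :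
    ∃ r : GraphWalk X E x x, k ≤ r.n := by
  induction k with
  | zero => exact ⟨p, Nat.zero_le _⟩
  | succ k ih =>
    obtain ⟨r, hr⟩ := ih
    obtain ⟨s, hs, -⟩ := exists_append p r
    exact ⟨s, by omega⟩

theorem isEmpty_closed {X : Type*} {E : X → X → Type*} {x : X}
    [Finite (GraphWalk X E x x)] : IsEmpty (GraphWalk X E x x) := by
  refine ⟨fun p => ?_⟩
  obtain ⟨b, hb⟩ := (Set.finite_range fun r : GraphWalk X E x x => r.n).bddAbove
  obtain ⟨r, hr⟩ := exists_long p (b + 1)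
  have := hb ⟨r, rfl⟩
  simp only at this
  omega

end GraphWalk

/-- **The poset of a locally finite reflexive directed graph.**
For a reflexive directed graph `(X, E)` which is locally finite (each `E x x` is finite
and each set of walks `W(x,y)` is finite), the relation `x ≤ y ↔ x = y ∨ (∃ walk x → y)`
is a partial order on `X`, and this poset is locally finite: every interval
`{z | x ≤ z ∧ z ≤ y}` is finite. -/
theorem graph_partialOrder_locallyFinite
    {X : Type*} (E : X → X → Type*)
    (hrefl : ∀ x : X, Nonempty (E x x))
    (hEfin : ∀ x : X, Finite (E x x))
    (hWfin : ∀ x y : X, Finite (GraphWalk X E x y)) :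
    IsPartialOrder X (fun x y => x = y ∨ Nonempty (GraphWalk X E x y)) ∧
      ∀ x y : X,
        {z : X | (x = z ∨ Nonempty (GraphWalk X E x z)) ∧
          (z = y ∨ Nonempty (GraphWalk X E z y))}.Finite := by
  refine ⟨{ refl := fun x => Or.inl rfl, trans := ?_, antisymm := ?_ }, ?_⟩
  · rintro x z y (rfl | ⟨⟨p⟩⟩) (rfl | ⟨⟨q⟩⟩)
    · exact Or.inl rfl
    · exact Or.inr ⟨q⟩
    · exact Or.inr ⟨p⟩
    · exact Or.inr ⟨(p.exists_append q).choose⟩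
  · rintro x y (rfl | ⟨⟨p⟩⟩) (h | ⟨⟨q⟩⟩)
    · rfl
    · rfl
    · exact h.symm
    · exact (GraphWalk.isEmpty_closed.false (p.exists_append q).choose).elim
  · intro x y
    have hfin : (⋃ r : GraphWalk X E x y, Set.range r.v).Finite :=
      Set.finite_iUnion fun r => Set.finite_range r.v
    refine ((hfin.insert y).insert x).subset ?_
    rintro z ⟨rfl | ⟨⟨p⟩⟩, rfl | ⟨⟨q⟩⟩⟩
    · simp
    · simp
    · simp
    · obtain ⟨r, -, hs⟩ := p.exists_append q
      exact Or.inr (Or.inr (Set.mem_iUnion.2 ⟨r, hs ⟨0, q.first⟩⟩))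
end

section
/- Let C be a locally finite category, and let (C₀, ≤) be the locally finite poset of objects of C with x ≤ y if and only if there exists a morphism x → y. Then the adjacency map ξ given by ξ[x,y] = |C(x,y)| is invertible in the incidence algebra of (C₀, ≤) over ℚ; its inverse μ satisfies μ[x,x] = 1/|C(x,x)| and, for x < y, μ[x,y] = Σ_{n ≥ 1} Σ_{x = x₀ < x₁ < ⋯ < xₙ = y} (−1)ⁿ · |C(x₀,x₁)|⋯|C(x_{n−1},xₙ)| / (|C(x₀,x₀)|·|C(x₁,x₁)|⋯|C(xₙ,xₙ)|). -/
/-!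
Splitting a chain `x = x₀ < x₁ < ⋯ < xₙ = y` with `n ≥ 1` at its second element `z = x₁` gives a
bijection with the chains from `z` to `y`, where `x < z ≤ y`, and the weight changes by the factor
`-ξ[x,z] / ξ[x,x]`. Hence the chain sum `μ` satisfies
`ξ[x,x] μ[x,y] = -∑_{x < z ≤ y} ξ[x,z] μ[z,y]` for `x ≠ y`, which says exactly that `ξ ⋆ μ = ε`
(`mul_chainSum`). Since `ξ` is nonzero on the diagonal it is left cancellable in the incidence
algebra (`IncidenceAlgebra.eq_zero_of_mul_eq_zero`), and `ξ ⋆ (μ ⋆ ξ) = ξ = ξ ⋆ ε` yields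
`μ ⋆ ξ = ε`.
-/

open CategoryTheory

/-- The weight of a chain of objects `l = [x₀, …, xₙ]` of a category `C`:
`(−1)ⁿ · |C(x₀,x₁)|⋯|C(x_{n−1},xₙ)| / (|C(x₀,x₀)|·|C(x₁,x₁)|⋯|C(xₙ,xₙ)|)`. -/
noncomputable def chainWeight {C : Type*} [Category C] (l : List C) : ℚ :=
  (-1 : ℚ) ^ (l.length - 1) *
    ((l.zip l.tail).map fun p => (Nat.card (p.1 ⟶ p.2) : ℚ)).prod /
    (l.map fun x => (Nat.card (x ⟶ x) : ℚ)).prod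

open Finset

/-- The strictly increasing lists with first element `x` and last element `y`; for `x = y` this is
the single list `[x]`. -/
def chainsFromTo {α : Type*} [PartialOrder α] (x y : α) : Set (List α) :=
  {l | l.IsChain (fun a b => a ≤ b ∧ a ≠ b) ∧ l.head? = some x ∧ l.getLast? = some y}

lemma le_of_mem_chainsFromTo {α : Type*} [PartialOrder α] {y : α} (l : List α) :
    ∀ x, l ∈ chainsFromTo x y → x ≤ y := by
  induction l with
  | nil => rintro x ⟨-, h, -⟩; simp at h
  | cons a t ih =>
    rintro x ⟨hc, hx, hy⟩
    obtain rfl : a = x := by simpa using hx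
    cases t with
    | nil => exact le_of_eq (by simpa using hy)
    | cons b t =>
      rw [List.isChain_cons_cons] at hc
      exact hc.1.1.trans (ih b ⟨hc.2, rfl, by simpa using hy⟩)

lemma chainsFromTo_self {α : Type*} [PartialOrder α] (x : α) : chainsFromTo x x = {[x]} := by
  ext l
  constructor
  · rintro ⟨hc, hx, hy⟩
    match l, hc, hx, hy with
    | [a], _, hx, _ => simpa using hx
    | a :: b :: t, hc, hx, hy =>
      obtain rfl : a = x := by simpa using hx
      rw [List.isChain_cons_cons] at hc
      have hb : b ≤ a := le_of_mem_chainsFromTo (b :: t) b ⟨hc.2, rfl, by simpa using hy⟩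
      exact absurd (le_antisymm hc.1.1 hb) hc.1.2
  · rintro rfl
    exact ⟨by simp, rfl, rfl⟩

/-- A chain between distinct elements is determined by its second element `z` and the remaining
chain from `z`. -/
lemma chainsFromTo_eq_biUnion {α : Type*} [PartialOrder α] [LocallyFiniteOrder α] {x y : α}
    (hxy : x ≠ y) :
    chainsFromTo x y = ⋃ z ∈ (Ioc x y : Set α), List.cons x '' chainsFromTo z y := by
  ext l
  simp only [Set.mem_iUnion, Set.mem_image, exists_prop, coe_Ioc, Set.mem_Ioc]
  constructor
  · rintro ⟨hc, hx, hy⟩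
    match l, hc, hx, hy with
    | [a], _, hx, hy =>
      simp only [List.head?_cons, Option.some.injEq, List.getLast?_singleton] at hx hy
      exact absurd (hx.symm.trans hy) hxy
    | a :: b :: t, hc, hx, hy =>
      obtain rfl : a = x := by simpa using hx
      rw [List.isChain_cons_cons] at hc
      have hb : b :: t ∈ chainsFromTo b y := ⟨hc.2, rfl, by simpa using hy⟩
      exact ⟨b, ⟨lt_of_le_of_ne hc.1.1 hc.1.2, le_of_mem_chainsFromTo _ _ hb⟩, _, hb, rfl⟩
  · rintro ⟨z, ⟨hz, -⟩, l, ⟨hc, hx, hy⟩, rfl⟩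
    match l, hc, hx, hy with
    | a :: t, hc, hx, hy =>
      obtain rfl : a = z := by simpa using hx
      exact ⟨List.isChain_cons_cons.2 ⟨⟨hz.le, hz.ne⟩, hc⟩, rfl, by simpa using hy⟩

lemma card_Icc_lt_of_mem_Ioc {α : Type*} [PartialOrder α] [LocallyFiniteOrder α] {x y z : α}
    (hz : z ∈ Ioc x y) : #(Icc z y) < #(Icc x y) := by
  rw [mem_Ioc] at hz
  exact card_lt_card (Icc_ssubset_Icc_left (hz.1.le.trans hz.2) hz.1 le_rfl)

lemma finite_chainsFromTo {α : Type*} [PartialOrder α] [LocallyFiniteOrder α] (x y : α) :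
    (chainsFromTo x y).Finite := by
  induction hn : #(Icc x y) using Nat.strong_induction_on generalizing x with
  | _ n ih =>
    subst hn
    by_cases hxy : x = y
    · subst hxy
      rw [chainsFromTo_self]
      exact Set.finite_singleton _
    · rw [chainsFromTo_eq_biUnion hxy]
      exact (finite_toSet _).biUnion fun z hz =>
        (ih _ (card_Icc_lt_of_mem_Ioc (mem_coe.1 hz)) z rfl).image _

/-- The sum of the weights `W` over all chains from `x` to `y`, as an element of the incidence
algebra. -/
noncomputable def chainSum {α : Type*} [PartialOrder α] (W : List α → ℚ) :
    IncidenceAlgebra ℚ α where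
  toFun x y := ∑ᶠ l ∈ chainsFromTo x y, W l
  eq_zero_of_not_le' x y h := by
    have : chainsFromTo x y = ∅ :=
      Set.eq_empty_of_forall_notMem fun l hl => h (le_of_mem_chainsFromTo l x hl)
    simp [this]

lemma chainSum_apply {α : Type*} [PartialOrder α] (W : List α → ℚ) (x y : α) :
    chainSum W x y = ∑ᶠ l ∈ chainsFromTo x y, W l := rfl

lemma chainSum_self {α : Type*} [PartialOrder α] (W : List α → ℚ) (x : α) :
    chainSum W x x = W [x] := by
  rw [chainSum_apply, chainsFromTo_self, finsum_mem_singleton]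

/-- The recursion for the chain sum, obtained by summing over the second element of the chain; `hW`
is the effect on the weight of prepending an element. -/
lemma chainSum_of_ne {α : Type*} [PartialOrder α] [LocallyFiniteOrder α]
    {ξ : IncidenceAlgebra ℚ α} {W : List α → ℚ}
    (hW : ∀ x z t, W (x :: z :: t) = -(ξ x z / ξ x x) * W (z :: t)) {x y : α} (hxy : x ≠ y) :
    chainSum W x y = ∑ z ∈ Ioc x y, -(ξ x z / ξ x x) * chainSum W z y := by
  have hdisj : (Ioc x y : Set α).PairwiseDisjoint fun z => List.cons x '' chainsFromTo z y := by
    intro z _ z' _ hzz'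
    refine Set.disjoint_left.2 ?_
    rintro _ ⟨l, hl, rfl⟩ ⟨l', hl', h⟩
    obtain rfl : l' = l := List.cons_injective h
    exact hzz' (Option.some.inj (hl.2.1.symm.trans hl'.2.1))
  rw [chainSum_apply, chainsFromTo_eq_biUnion hxy,
    finsum_mem_biUnion hdisj (finite_toSet _) fun z _ => (finite_chainsFromTo z y).image _,
    finsum_mem_coe_finset]
  refine sum_congr rfl fun z _ => ?_
  rw [finsum_mem_image List.cons_injective.injOn, chainSum_apply,
    mul_finsum_mem' W _ (finite_chainsFromTo z y)]
  refine finsum_mem_congr rfl fun l hl => ?_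
  match l, hl with
  | a :: t, hl =>
    obtain rfl : a = z := by simpa using hl.2.1
    exact hW _ _ _

lemma mul_chainSum {α : Type*} [PartialOrder α] [LocallyFiniteOrder α] [DecidableEq α]
    {ξ : IncidenceAlgebra ℚ α} {W : List α → ℚ} (hξ : ∀ x, ξ x x ≠ 0)
    (hW₁ : ∀ x, W [x] = 1 / ξ x x)
    (hW : ∀ x z t, W (x :: z :: t) = -(ξ x z / ξ x x) * W (z :: t)) :
    ξ * chainSum W = 1 := by
  ext x y hle
  rw [IncidenceAlgebra.mul_apply, IncidenceAlgebra.one_apply]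
  split_ifs with hxy
  · subst hxy
    rw [Icc_self, sum_singleton, chainSum_self, hW₁, mul_one_div_cancel (hξ x)]
  · rw [← Ioc_insert_left hle, sum_insert (by simp), chainSum_of_ne hW hxy, mul_sum,
      ← sum_add_distrib]
    refine sum_eq_zero fun z _ => ?_
    have := hξ x
    field_simp
    ring

/-- By induction on the size of `[x, y]`, every term of `(ξ * g) x y` other than `ξ x x * g x y`
vanishes. -/
lemma IncidenceAlgebra.eq_zero_of_mul_eq_zero {α : Type*} [PartialOrder α] [LocallyFiniteOrder α]
    {ξ g : IncidenceAlgebra ℚ α} (hξ : ∀ x, ξ x x ≠ 0) (h : ξ * g = 0) : g = 0 := by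
  classical
  ext x y hle
  induction hn : #(Icc x y) using Nat.strong_induction_on generalizing x with
  | _ n ih =>
    subst hn
    have hx : (ξ * g) x y = 0 := by rw [h, IncidenceAlgebra.zero_apply]
    rw [IncidenceAlgebra.mul_apply, ← Ioc_insert_left hle, sum_insert (by simp),
      sum_eq_zero fun z hz => ?_, add_zero] at hx
    · exact (mul_eq_zero.1 hx).resolve_left (hξ x)
    · rw [ih _ (card_Icc_lt_of_mem_Ioc hz) z (mem_Ioc.1 hz).2 rfl,
        IncidenceAlgebra.zero_apply, mul_zero]

lemma chainWeight_singleton {C : Type*} [Category C] (x : C) :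
    chainWeight [x] = 1 / (Nat.card (x ⟶ x) : ℚ) := by
  simp [chainWeight]

lemma chainWeight_cons_cons {C : Type*} [Category C] (x z : C) (t : List C) :
    chainWeight (x :: z :: t) =
      -((Nat.card (x ⟶ z) : ℚ) / (Nat.card (x ⟶ x) : ℚ)) * chainWeight (z :: t) := by
  simp only [chainWeight, List.tail_cons, List.zip_cons_cons, List.map_cons, List.prod_cons,
    List.length_cons, Nat.add_sub_cancel, pow_succ]
  simp only [div_eq_mul_inv, mul_inv]
  ring

/-- **The Möbius function of a locally finite category (Leinster).**
Let `C` be a locally finite category, with induced locally finite partial order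
`x ≤ y ↔ ∃ (x ⟶ y)` on objects.  The adjacency map `ξ[x,y] = |C(x,y)|` is invertible in
the incidence algebra of this poset over `ℚ`: there is `μ` supported on `≤`, convolution
inverse to `ξ` on both sides, with `μ[x,x] = 1/|C(x,x)|` and, for `x < y`,
`μ[x,y] = Σ_{n ≥ 1} Σ_{x = x₀ < ⋯ < xₙ = y} (−1)ⁿ·|C(x₀,x₁)|⋯|C(x_{n−1},xₙ)| /
(|C(x₀,x₀)|⋯|C(xₙ,xₙ)|)`, the chains being encoded as strictly increasing lists from `x`
to `y` of length at least `2`. -/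
theorem mobius_function_of_locallyFinite_category
    {C : Type*} [Category C] [DecidableEq C]
    (hfin : ∀ x y : C, Finite (x ⟶ y))
    (hcycle : ∀ x y : C, Nonempty (x ⟶ y) → Nonempty (y ⟶ x) → x = y)
    (hint : ∀ x y : C, {z : C | Nonempty (x ⟶ z) ∧ Nonempty (z ⟶ y)}.Finite) :
    ∃ μ : C → C → ℚ,
      (∀ x y : C, ¬Nonempty (x ⟶ y) → μ x y = 0) ∧
      (∀ x z : C, (∑ᶠ y ∈ {y : C | Nonempty (x ⟶ y) ∧ Nonempty (y ⟶ z)},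
          (Nat.card (x ⟶ y) : ℚ) * μ y z) = if x = z then 1 else 0) ∧
      (∀ x z : C, (∑ᶠ y ∈ {y : C | Nonempty (x ⟶ y) ∧ Nonempty (y ⟶ z)},
          μ x y * (Nat.card (y ⟶ z) : ℚ)) = if x = z then 1 else 0) ∧
      (∀ x : C, μ x x = 1 / (Nat.card (x ⟶ x) : ℚ)) ∧
      (∀ x y : C, Nonempty (x ⟶ y) → x ≠ y →
        μ x y = ∑ᶠ l ∈ {l : List C | l.Chain' (fun a b => Nonempty (a ⟶ b) ∧ a ≠ b) ∧
          l.head? = some x ∧ l.getLast? = some y ∧ 2 ≤ l.length}, chainWeight l) := by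
  -- The partial order on objects, with its finite intervals.
  let _ : PartialOrder C :=
    { le := fun x y => Nonempty (x ⟶ y)
      le_refl := fun x => ⟨𝟙 x⟩
      le_trans := fun _ _ _ ⟨f⟩ ⟨g⟩ => ⟨f ≫ g⟩
      le_antisymm := hcycle }
  let _ : LocallyFiniteOrder C := LocallyFiniteOrder.ofFiniteIcc hint
  let ξ : IncidenceAlgebra ℚ C :=
    { toFun := fun x y => (Nat.card (x ⟶ y) : ℚ)
      eq_zero_of_not_le' := fun x y h => by
        have : IsEmpty (x ⟶ y) := not_nonempty_iff.1 h
        simp }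
  have hξ : ∀ x, ξ x x ≠ 0 := fun x => by
    have : Nonempty (x ⟶ x) := ⟨𝟙 x⟩
    exact Nat.cast_ne_zero.2 Nat.card_pos.ne'
  have hright : ξ * chainSum chainWeight = 1 :=
    mul_chainSum hξ chainWeight_singleton chainWeight_cons_cons
  have hleft : chainSum chainWeight * ξ = 1 := by
    refine sub_eq_zero.1 (IncidenceAlgebra.eq_zero_of_mul_eq_zero hξ ?_)
    rw [mul_sub, ← mul_assoc, hright, one_mul, mul_one, sub_self]
  have hIcc : ∀ x z : C, {y : C | Nonempty (x ⟶ y) ∧ Nonempty (y ⟶ z)} = (Icc x z : Finset C) :=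
    fun x z => (coe_Icc x z).symm
  refine ⟨chainSum chainWeight, fun x y h => IncidenceAlgebra.apply_eq_zero_of_not_le h _,
    fun x z => ?_, fun x z => ?_, fun x => ?_, fun x y _ hne => ?_⟩
  · rw [hIcc, finsum_mem_coe_finset]
    exact congrArg (fun f : IncidenceAlgebra ℚ C => f x z) hright
  · rw [hIcc, finsum_mem_coe_finset]
    exact congrArg (fun f : IncidenceAlgebra ℚ C => f x z) hleft
  · rw [chainSum_self, chainWeight_singleton]
  · rw [chainSum_apply]
    refine finsum_mem_congr (Set.ext fun l => ⟨?_, fun ⟨hc, hx, hy, _⟩ => ⟨hc, hx, hy⟩⟩)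
      fun _ _ => rfl
    rintro ⟨hc, hx, hy⟩
    refine ⟨hc, hx, hy, ?_⟩
    -- A list with distinct first and last elements has length at least two.
    match l, hx, hy with
    | [a], hx, hy => exact absurd (Option.some.inj (hx.symm.trans hy)) hne
    | a :: b :: t, _, _ => simp
end

section
/- A category C is essentially locally finite if and only if C is equivalent to a locally finite category. -/
/-!
Both directions transport morphisms along fully faithful functors. An essentially locally finite
category is equivalent to its skeleton, where isomorphic objects are equal, so the three conditions
become those of local finiteness. Conversely, given `e : C ≌ D` with `D` locally finite,
every isomorphism class in `[x̄,ȳ]` is the class of `e.inverse d` for some `d` in the finite set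
`[e x, e y]`.
-/

open CategoryTheory

universe v u

/-- `C` is a locally finite category: finite hom-sets, any diagram `x → y → x` forces
`x = y`, and each set `[x,y]` of objects `z` fitting in a diagram `x → z → y` is
finite. -/
def IsLocallyFiniteCat (C : Type u) [Category.{v} C] : Prop :=
  (∀ x y : C, Finite (x ⟶ y)) ∧
  (∀ x y : C, (x ⟶ y) → (y ⟶ x) → x = y) ∧
  (∀ x y : C, {z : C | Nonempty (x ⟶ z) ∧ Nonempty (z ⟶ y)}.Finite)

/-- `C` is an essentially locally finite category: finite hom-sets, any diagram
`x → y → x` forces `x ≅ y`, and each set `[x̄,ȳ]` of isomorphism classes of objects `z`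
fitting in a diagram `x → z → y` is finite. -/
def IsEssentiallyLocallyFiniteCat (C : Type u) [Category.{v} C] : Prop :=
  (∀ x y : C, Finite (x ⟶ y)) ∧
  (∀ x y : C, (x ⟶ y) → (y ⟶ x) → Nonempty (x ≅ y)) ∧
  (∀ x y : C, {c : Quotient (isIsomorphicSetoid C) |
    ∃ z : C, Quotient.mk (isIsomorphicSetoid C) z = c ∧
      Nonempty (x ⟶ z) ∧ Nonempty (z ⟶ y)}.Finite)

/-- **Essentially locally finite = equivalent to a locally finite category.**
A category `C` is essentially locally finite if and only if it is equivalent to a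
locally finite category. -/
theorem essentiallyLocallyFinite_iff_equivalent_locallyFinite
    (C : Type u) [Category.{v} C] :
    IsEssentiallyLocallyFiniteCat C ↔
      ∃ (D : Type u) (_ : Category.{v} D), IsLocallyFiniteCat D ∧ Nonempty (C ≌ D) := by
  constructor
  · rintro ⟨hfin, hiso, hint⟩
    let F : Skeleton C ⥤ C := fromSkeleton C
    have hskel : ∀ x y : Skeleton C, Nonempty (F.obj x ≅ F.obj y) → x = y :=
      fun x y ⟨i⟩ => skeleton_skeletal C ⟨F.preimageIso i⟩
    refine ⟨Skeleton C, inferInstance, ⟨fun x y => ?_, fun x y f g => ?_, fun x y => ?_⟩,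
      ⟨(skeletonEquivalence C).symm⟩⟩
    · have := hfin (F.obj x) (F.obj y)
      exact Finite.of_injective (fun f : x ⟶ y => F.map f) F.map_injective
    · exact hskel x y (hiso _ _ (F.map f) (F.map g))
    · refine Set.Finite.of_finite_image (f := fun z : Skeleton C =>
        Quotient.mk (isIsomorphicSetoid C) (F.obj z)) ((hint (F.obj x) (F.obj y)).subset ?_) ?_
      · rintro _ ⟨z, ⟨⟨f⟩, ⟨g⟩⟩, rfl⟩
        exact ⟨F.obj z, rfl, ⟨F.map f⟩, ⟨F.map g⟩⟩
      · intro a _ b _ hab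
        exact hskel a b (Quotient.exact hab)
  · rintro ⟨D, _, ⟨hfin, heq, hint⟩, ⟨e⟩⟩
    refine ⟨fun x y => ?_, fun x y f g => ?_, fun x y => ?_⟩
    · have := hfin (e.functor.obj x) (e.functor.obj y)
      exact Finite.of_injective (fun f : x ⟶ y => e.functor.map f) e.functor.map_injective
    · exact ⟨e.functor.preimageIso
        (eqToIso (heq _ _ (e.functor.map f) (e.functor.map g)))⟩
    · refine ((hint (e.functor.obj x) (e.functor.obj y)).image fun d =>
        Quotient.mk (isIsomorphicSetoid C) (e.inverse.obj d)).subset ?_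
      rintro _ ⟨z, rfl, ⟨f⟩, ⟨g⟩⟩
      exact ⟨e.functor.obj z, ⟨⟨e.functor.map f⟩, ⟨e.functor.map g⟩⟩,
        Quotient.sound ⟨(e.unitIso.app z).symm⟩⟩
end

section
/- (Leroux) A category C is a Möbius category (every morphism of C admits only finitely many proper decompositions) if and only if the following three conditions hold: (i) for every morphism f, the set PD₂f of proper 2-decompositions of f is finite; (ii) identity morphisms admit no proper decomposition; and (iii) if a morphism f fixes some morphism g (i.e., f∘g = g or g∘f = g), then f is an identity morphism. -/
/-!
Both directions rest on comparing decompositions of different lengths.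

If `C` is Möbius, the lengths of the proper decompositions of a fixed morphism are bounded
(`IsMobiusCategory.not_unbounded`). A proper decomposition `f ≫ h = 𝟙` of an identity, or a
non-identity `f` fixing some `g`, would violate this: one can insert `(f, h)`, respectively `f`,
arbitrarily often without changing the composite.

Conversely, assume the three conditions and attach to each `f` the finite set `rightFactors f` of
all `h` occurring in a proper factorization `f = g ≫ h`. If `f = g ≫ h` is proper, then
`rightFactors h ⊆ rightFactors f`, because a composite of non-identities is a non-identity by (ii),
and the inclusion is strict, because `h ∈ rightFactors h` would mean `h = a ≫ h` with `a` not an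
identity, against (iii). Induction on the cardinality of `rightFactors f` then shows that `f` has
finitely many proper decompositions: after the first component `g`, there remains a proper
decomposition of some `h` with `(g, h)` in the finite set of proper `2`-decompositions.
-/

open CategoryTheory

universe v u

/-- A composable chain of morphisms in a category, from `x` to `y`:
a nonempty sequence `(f₁, …, fₙ)` with `fₙ ∘ ⋯ ∘ f₁` going from `x` to `y`. -/
inductive CompChain {C : Type u} [Category.{v} C] : C → C → Type (max u v)
  | single : ∀ {x y : C}, (x ⟶ y) → CompChain x y
  | cons : ∀ {x y z : C}, (x ⟶ y) → CompChain y z → CompChain x z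

namespace CompChain

variable {C : Type u} [Category.{v} C]

/-- The composite `fₙ ∘ ⋯ ∘ f₁` of a composable chain. -/
def comp : ∀ {x y : C}, CompChain x y → (x ⟶ y)
  | _, _, single f => f
  | _, _, cons f c => f ≫ c.comp

/-- The number of morphisms in a composable chain. -/
def length : ∀ {x y : C}, CompChain x y → ℕ
  | _, _, single _ => 1
  | _, _, cons _ c => c.length + 1

end CompChain

/-- A morphism `f : x ⟶ y` is an identity morphism if `x = y` and `f` is the identity
(up to the transport induced by `x = y`). -/
def IsIdentityMor {C : Type u} [Category.{v} C] {x y : C} (f : x ⟶ y) : Prop :=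
  ∃ h : x = y, f = eqToHom h

/-- A chain is proper if none of its component morphisms is an identity morphism. -/
def CompChain.Proper {C : Type u} [Category.{v} C] :
    ∀ {x y : C}, CompChain x y → Prop
  | _, _, single f => ¬IsIdentityMor f
  | _, _, cons f c => ¬IsIdentityMor f ∧ c.Proper

/-- `Dₙf`: the `n`-decompositions of the morphism `f`, i.e. chains `(f₁, …, fₙ)` with
`fₙ ∘ ⋯ ∘ f₁ = f`. -/
def nDecomps {C : Type u} [Category.{v} C] {x y : C} (f : x ⟶ y) (n : ℕ) :=
  {c : CompChain x y // c.comp = f ∧ c.length = n}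

/-- `PDₙf`: the proper `n`-decompositions of `f` (with `PD₁f = D₁f` by convention). -/
def nProperDecomps {C : Type u} [Category.{v} C] {x y : C} (f : x ⟶ y) (n : ℕ) :=
  {c : CompChain x y // c.comp = f ∧ c.length = n ∧ (n = 1 ∨ c.Proper)}

/-- `PDf`: all proper decompositions of `f` (including the trivial `1`-decomposition). -/
def properDecomps {C : Type u} [Category.{v} C] {x y : C} (f : x ⟶ y) :=
  {c : CompChain x y // c.comp = f ∧ (c.length = 1 ∨ c.Proper)}

/-- A category is a Möbius category if every morphism admits only finitely many proper
decompositions. -/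
def IsMobiusCategory (C : Type u) [Category.{v} C] : Prop :=
  ∀ (x y : C) (f : x ⟶ y), Finite (properDecomps f)

section

variable {C : Type u} [Category.{v} C]

lemma isIdentityMor_endo_iff {x : C} {f : x ⟶ x} : IsIdentityMor f ↔ f = 𝟙 x :=
  ⟨fun ⟨_, h⟩ => h, fun h => ⟨rfl, h⟩⟩

lemma CompChain.one_le_length {x y : C} (c : CompChain x y) : 1 ≤ c.length := by
  cases c <;> simp [CompChain.length]

/-- In a Möbius category the proper decompositions of a morphism have bounded length. -/
lemma IsMobiusCategory.not_unbounded (hC : IsMobiusCategory C) {x y : C} (f : x ⟶ y)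
    (h : ∀ n : ℕ, ∃ c : CompChain x y, c.comp = f ∧ c.Proper ∧ n ≤ c.length) : False := by
  have := hC x y f
  obtain ⟨B, hB⟩ := (Set.finite_range fun c : properDecomps f => c.1.length).bddAbove
  obtain ⟨c, hc, hp, hl⟩ := h (B + 1)
  have : c.length ≤ B := hB ⟨⟨c, hc, Or.inr hp⟩, rfl⟩
  omega

lemma IsMobiusCategory.not_proper_of_comp_eq_id (hC : IsMobiusCategory C) {x : C}
    (c : CompChain x x) (hc : c.comp = 𝟙 x) (hl : 2 ≤ c.length) : ¬c.Proper := by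
  intro hp
  cases c with
  | single f => simp [CompChain.length] at hl
  | @cons _ y _ f d =>
    obtain ⟨hf, hd⟩ := hp
    change f ≫ d.comp = 𝟙 x at hc
    -- `d.comp` is not an identity, since otherwise `f` would be one as well.
    have hh : ¬IsIdentityMor d.comp := by
      rintro ⟨rfl, h⟩
      rw [h] at hc
      exact hf ⟨rfl, by simpa using hc⟩
    refine hC.not_unbounded (𝟙 x) fun n => ?_
    induction n with
    | zero => exact ⟨.cons f (.single d.comp), hc, ⟨hf, hh⟩, Nat.zero_le _⟩
    | succ n ih =>
      obtain ⟨c, h1, h2, h3⟩ := ih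
      refine ⟨.cons f (.cons d.comp c), ?_, ⟨hf, hh, h2⟩, ?_⟩
      · simp [CompChain.comp, h1, hc]
      · simp only [CompChain.length]; omega

lemma IsMobiusCategory.eq_id_of_comp_right (hC : IsMobiusCategory C) {w x : C} (f : x ⟶ x)
    (g : w ⟶ x) (h : g ≫ f = g) : f = 𝟙 x := by
  by_contra hne
  have hf : ¬IsIdentityMor f := isIdentityMor_endo_iff.not.mpr hne
  have hg : ¬IsIdentityMor g := by
    rintro ⟨rfl, rfl⟩
    exact hne (by simpa using h)
  have key : ∀ n : ℕ, ∃ c : CompChain x x, g ≫ c.comp = g ∧ c.Proper ∧ n ≤ c.length := by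
    intro n
    induction n with
    | zero => exact ⟨.single f, h, hf, Nat.zero_le _⟩
    | succ n ih =>
      obtain ⟨c, h1, h2, h3⟩ := ih
      refine ⟨.cons f c, ?_, ⟨hf, h2⟩, Nat.succ_le_succ h3⟩
      rw [CompChain.comp, ← Category.assoc, h, h1]
  refine hC.not_unbounded g fun n => ?_
  obtain ⟨c, h1, h2, h3⟩ := key n
  exact ⟨.cons g c, h1, ⟨hg, h2⟩, Nat.le_succ_of_le h3⟩

lemma IsMobiusCategory.eq_id_of_comp_left (hC : IsMobiusCategory C) {x w : C} (f : x ⟶ x)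
    (g : x ⟶ w) (h : f ≫ g = g) : f = 𝟙 x := by
  by_contra hne
  have hf : ¬IsIdentityMor f := isIdentityMor_endo_iff.not.mpr hne
  have hg : ¬IsIdentityMor g := by
    rintro ⟨rfl, rfl⟩
    exact hne (by simpa using h)
  refine hC.not_unbounded g fun n => ?_
  induction n with
  | zero => exact ⟨.single g, rfl, hg, Nat.zero_le _⟩
  | succ n ih =>
    obtain ⟨c, h1, h2, h3⟩ := ih
    exact ⟨.cons f c, by rw [CompChain.comp, h1, h], ⟨hf, h2⟩, Nat.succ_le_succ h3⟩

/-- The proper `2`-decompositions `(g, h)` of `f`, presented as a set of pairs of morphisms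
together with the intermediate object. -/
def properPairs {x z : C} (f : x ⟶ z) : Set (Σ y : C, (x ⟶ y) × (y ⟶ z)) :=
  {p | ¬IsIdentityMor p.2.1 ∧ ¬IsIdentityMor p.2.2 ∧ p.2.1 ≫ p.2.2 = f}

/-- The second components `h` of the proper `2`-decompositions `(g, h)` of `f`, each recorded
with its source. -/
def rightFactors {x z : C} (f : x ⟶ z) : Set (Σ y : C, (y ⟶ z)) :=
  (fun p => ⟨p.1, p.2.2⟩) '' properPairs f

lemma finite_properPairs {x z : C} (f : x ⟶ z) (hfin : Finite (nProperDecomps f 2)) :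
    (properPairs f).Finite := by
  let φ : properPairs f → nProperDecomps f 2 := fun p =>
    ⟨.cons p.1.2.1 (.single p.1.2.2), p.2.2.2, rfl, Or.inr ⟨p.2.1, p.2.2.1⟩⟩
  refine Set.finite_coe_iff.mp (Finite.of_injective φ ?_)
  rintro ⟨⟨y, g, h⟩, hp⟩ ⟨⟨y', g', h'⟩, hp'⟩ heq
  have heq' : CompChain.cons g (.single h) = CompChain.cons g' (.single h') :=
    congrArg Subtype.val heq
  cases heq'
  rfl

lemma not_isIdentityMor_comp
    (h2 : ∀ (x : C) (c : CompChain x x), c.comp = 𝟙 x → 2 ≤ c.length → ¬c.Proper)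
    {x y z : C} {f : x ⟶ y} {g : y ⟶ z} (hf : ¬IsIdentityMor f) (hg : ¬IsIdentityMor g) :
    ¬IsIdentityMor (f ≫ g) := by
  rintro ⟨rfl, h⟩
  exact h2 x (.cons f (.single g)) h le_rfl ⟨hf, hg⟩

lemma CompChain.Proper.not_isIdentityMor_comp
    (h2 : ∀ (x : C) (c : CompChain x x), c.comp = 𝟙 x → 2 ≤ c.length → ¬c.Proper)
    {x y : C} {c : CompChain x y} (hc : c.Proper) : ¬IsIdentityMor c.comp := by
  induction c with
  | single f => exact hc
  | cons f d ih => exact _root_.not_isIdentityMor_comp h2 hc.1 (ih hc.2)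

/-- The strict decrease driving the induction in `finite_proper`. -/
lemma rightFactors_ssubset
    (h2 : ∀ (x : C) (c : CompChain x x), c.comp = 𝟙 x → 2 ≤ c.length → ¬c.Proper)
    (h3 : ∀ (x w : C) (f : x ⟶ x) (g : x ⟶ w), f ≫ g = g → f = 𝟙 x)
    {x y z : C} {g : x ⟶ y} {h : y ⟶ z} (hg : ¬IsIdentityMor g) (hh : ¬IsIdentityMor h) :
    rightFactors h ⊂ rightFactors (g ≫ h) := by
  refine (Set.ssubset_iff_of_subset ?_).mpr ⟨⟨y, h⟩, ⟨⟨y, g, h⟩, ⟨hg, hh, rfl⟩, rfl⟩, ?_⟩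
  · rintro _ ⟨⟨w, a, b⟩, ⟨ha, hb, hab⟩, rfl⟩
    refine ⟨⟨w, g ≫ a, b⟩, ⟨not_isIdentityMor_comp h2 hg ha, hb, ?_⟩, rfl⟩
    simpa using congrArg (g ≫ ·) hab
  · rintro ⟨⟨w, a, b⟩, ⟨ha, hb, hab⟩, heq⟩
    dsimp only at ha hb hab heq
    cases heq
    exact ha (isIdentityMor_endo_iff.mpr (h3 _ _ a h hab))

lemma finite_proper
    (h1 : ∀ (x y : C) (f : x ⟶ y), (properPairs f).Finite)
    (h2 : ∀ (x : C) (c : CompChain x x), c.comp = 𝟙 x → 2 ≤ c.length → ¬c.Proper)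
    (h3 : ∀ (x w : C) (f : x ⟶ x) (g : x ⟶ w), f ≫ g = g → f = 𝟙 x)
    {x z : C} (f : x ⟶ z) : {c : CompChain x z | c.comp = f ∧ c.Proper}.Finite := by
  induction hn : (rightFactors f).ncard using Nat.strong_induction_on generalizing x f with
  | _ n ih =>
    have hfin : (⋃ p ∈ properPairs f, CompChain.cons p.2.1 ''
        {c : CompChain p.1 z | c.comp = p.2.2 ∧ c.Proper}).Finite := by
      refine (h1 _ _ f).biUnion fun p hp => Set.Finite.image _ ?_
      obtain ⟨y, g, h⟩ := p
      obtain ⟨hg, hh, rfl⟩ := hp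
      refine ih _ ?_ h rfl
      rw [← hn]
      exact Set.ncard_lt_ncard (rightFactors_ssubset h2 h3 hg hh) ((h1 _ _ _).image _)
    refine (hfin.insert (.single f)).subset ?_
    rintro c ⟨hc, hp⟩
    cases c with
    | single g =>
      obtain rfl : g = f := hc
      exact Set.mem_insert _ _
    | @cons _ y _ g d =>
      have hmem : (⟨y, g, d.comp⟩ : Σ y : C, (x ⟶ y) × (y ⟶ z)) ∈ properPairs f :=
        ⟨hp.1, hp.2.not_isIdentityMor_comp h2, hc⟩
      exact Set.mem_insert_of_mem _ (Set.mem_biUnion hmem ⟨d, ⟨rfl, hp.2⟩, rfl⟩)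

end

/-- **Leroux's characterization of Möbius categories.**
A category `C` is a Möbius category iff: (i) every morphism has finitely many proper
`2`-decompositions; (ii) identities admit no proper decomposition (of length ≥ 2); and
(iii) any endomorphism fixing some morphism (`f ∘ g = g` or `g ∘ f = g`) is an
identity. -/
theorem isMobiusCategory_iff_leroux (C : Type u) [Category.{v} C] :
    IsMobiusCategory C ↔
      ((∀ (x y : C) (f : x ⟶ y), Finite (nProperDecomps f 2)) ∧
       (∀ (x : C) (c : CompChain x x), c.comp = 𝟙 x → 2 ≤ c.length → ¬c.Proper) ∧
       (∀ (x : C) (f : x ⟶ x),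
         ((∃ (w : C) (g : w ⟶ x), g ≫ f = g) ∨ (∃ (w : C) (g : x ⟶ w), f ≫ g = g)) →
           f = 𝟙 x)) := by
  constructor
  · intro hC
    refine ⟨fun x y f => ?_, fun x c => hC.not_proper_of_comp_eq_id c, ?_⟩
    · have := hC x y f
      let φ : nProperDecomps f 2 → properDecomps f := fun c =>
        ⟨c.1, c.2.1, Or.inr (c.2.2.2.resolve_left (by decide))⟩
      have hφ : Function.Injective φ := fun c d h =>
        Subtype.ext (congrArg (fun e : properDecomps f => e.1) h)
      exact Finite.of_injective φ hφ
    · rintro x f (⟨w, g, h⟩ | ⟨w, g, h⟩)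
      · exact hC.eq_id_of_comp_right f g h
      · exact hC.eq_id_of_comp_left f g h
  · rintro ⟨h1, h2, h3⟩ x y f
    have hfin := finite_proper (fun x y f => finite_properPairs f (h1 x y f)) h2
      (fun x w f g h => h3 x f (Or.inr ⟨w, g, h⟩)) f
    -- The trivial decomposition `single f` counts even when `f` is an identity.
    refine Set.Finite.to_subtype ((hfin.insert (.single f)).subset ?_)
    rintro c ⟨hc, hl | hp⟩
    · cases c with
      | single g =>
        obtain rfl : g = f := hc
        exact Set.mem_insert _ _
      | cons g d =>
        have := d.one_le_length
        simp only [CompChain.length] at hl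
        omega
    · exact Set.mem_insert_of_mem _ ⟨hc, hp⟩
end

section
/- Let C be a category in which every hom-set C(x,y) is finite. Then C is a Möbius category if and only if C is both locally finite and one way, where C is one way if in any diagram x →f y →g x in C one has x = y and f = g = 1ₓ. -/
/-!
A proper chain is a chain of non-identity morphisms; since hom-sets are finite, the Möbius
condition amounts to finiteness of the set of all proper chains from `x` to `y`.

Suppose `C` is Möbius. If `f : x ⟶ y` and `g : y ⟶ x` are both non-identities, the chains
`(f, g, f, g, …, f, g)` are infinitely many proper chains from `x` to `x`, which is impossible
(`isIdentityMor_or_of_finite`). Taking `g = f` shows that endomorphisms are identities, and for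
`x ≠ y` no morphism between `x` and `y` is an identity; this gives one-wayness. An object `z` of
`[x, y]` other than `x` and `y` is the middle object of a proper chain `x ⟶ z ⟶ y`, so `[x, y]` is
finite.

Conversely, let `C` be locally finite and one way. A proper chain from `x` to `y` of length at
least two starts with some `x ⟶ z` where `z ≠ x`, and then `[z, y]` lies in `[x, y]` but misses `x`.
Induction on the cardinality of `[x, y]` shows that there are finitely many proper chains
(`finite_setOf_proper`).
-/

open CategoryTheory

universe v u

/-- In a Möbius category with finite hom-sets, the proper chains between two given objects form a
finite set: they are distributed over the finitely many possible composites. -/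
theorem IsMobiusCategory.finite_setOf_proper {C : Type u} [Category.{v} C]
    (hfin : ∀ x y : C, Finite (x ⟶ y)) (h : IsMobiusCategory C) (x y : C) :
    {c : CompChain x y | c.Proper}.Finite := by
  have := hfin x y
  have hu : (⋃ f : x ⟶ y, {c : CompChain x y | c.comp = f ∧ (c.length = 1 ∨ c.Proper)}).Finite :=
    Set.finite_iUnion fun f => Set.finite_coe_iff.1 (h x y f)
  refine hu.subset fun c hc => ?_
  exact Set.mem_iUnion.2 ⟨c.comp, rfl, Or.inr hc⟩

/-- The chain `(f, g, f, g, …, f, g)` of length `2 * (k + 1)`. -/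
def CompChain.alternating {C : Type u} [Category.{v} C] {x y : C} (f : x ⟶ y) (g : y ⟶ x) :
    ℕ → CompChain x x
  | 0 => cons f (single g)
  | k + 1 => cons f (cons g (alternating f g k))

theorem CompChain.length_alternating {C : Type u} [Category.{v} C] {x y : C} (f : x ⟶ y)
    (g : y ⟶ x) (k : ℕ) : (alternating f g k).length = 2 * (k + 1) := by
  induction k with
  | zero => rfl
  | succ k ih => simp only [alternating, length, ih]; ring

theorem CompChain.proper_alternating {C : Type u} [Category.{v} C] {x y : C} {f : x ⟶ y}
    {g : y ⟶ x} (hf : ¬IsIdentityMor f) (hg : ¬IsIdentityMor g) (k : ℕ) :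
    (alternating f g k).Proper := by
  induction k with
  | zero => exact ⟨hf, hg⟩
  | succ k ih => exact ⟨hf, hg, ih⟩

theorem isIdentityMor_or_of_finite {C : Type u} [Category.{v} C] {x y : C}
    (h : {c : CompChain x x | c.Proper}.Finite) (f : x ⟶ y) (g : y ⟶ x) :
    IsIdentityMor f ∨ IsIdentityMor g := by
  by_contra! hfg
  refine Set.infinite_of_injective_forall_mem (f := CompChain.alternating f g) ?_
    (CompChain.proper_alternating hfg.1 hfg.2) h
  intro k l hkl
  have := congrArg CompChain.length hkl
  simp only [CompChain.length_alternating] at this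
  omega

/-- The codomain of the first morphism of a chain. -/
def CompChain.mid {C : Type u} [Category.{v} C] : ∀ {x y : C}, CompChain x y → C
  | _, y, single _ => y
  | _, _, cons (y := z) _ _ => z

/-- In a locally finite one way category there are finitely many proper chains between two given
objects. -/
theorem finite_setOf_proper {C : Type u} [Category.{v} C] (hfin : ∀ x y : C, Finite (x ⟶ y))
    (hanti : ∀ x y : C, (x ⟶ y) → (y ⟶ x) → x = y)
    (hint : ∀ x y : C, {z : C | Nonempty (x ⟶ z) ∧ Nonempty (z ⟶ y)}.Finite)
    (hend : ∀ (x : C) (f : x ⟶ x), f = 𝟙 x) (x y : C) :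
    {c : CompChain x y | c.Proper}.Finite := by
  induction hn : {z : C | Nonempty (x ⟶ z) ∧ Nonempty (z ⟶ y)}.ncard using
    Nat.strong_induction_on generalizing x with
  | _ n ih =>
    have := hfin x y
    have hbig : (Set.range (CompChain.single (x := x) (y := y)) ∪
        ⋃ z ∈ {z : C | Nonempty (x ⟶ z) ∧ Nonempty (z ⟶ y)} \ {x},
          Set.image2 (CompChain.cons (x := x) (y := z) (z := y)) Set.univ
            {c | c.Proper}).Finite := by
      refine (Set.finite_range _).union (((hint x y).sdiff).biUnion fun z hz => ?_)
      obtain ⟨⟨⟨f⟩, ⟨g⟩⟩, hzx⟩ := hz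
      have := hfin x z
      refine Set.Finite.image2 _ Set.finite_univ (ih _ ?_ z rfl)
      rw [← hn]
      refine Set.ncard_lt_ncard ?_ (hint x y)
      refine (Set.ssubset_iff_of_subset ?_).2 ⟨x, ⟨⟨𝟙 x⟩, ⟨f ≫ g⟩⟩, ?_⟩
      · rintro w ⟨⟨a⟩, hb⟩
        exact ⟨⟨f ≫ a⟩, hb⟩
      · rintro ⟨⟨a⟩, -⟩
        exact hzx (hanti z x a f)
    refine hbig.subset fun c hc => ?_
    cases c with
    | single f => exact Or.inl ⟨f, rfl⟩
    | @cons _ z _ f c =>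
      refine Or.inr (Set.mem_biUnion (x := z) ⟨⟨⟨f⟩, ⟨c.comp⟩⟩, ?_⟩ ⟨f, trivial, c, hc.2, rfl⟩)
      rintro rfl
      exact hc.1 ⟨rfl, hend _ f⟩

/-- **Möbius categories = locally finite one-way categories.**
Let `C` be a category with finite hom-sets.  Then `C` is a Möbius category iff `C` is
locally finite (finite hom-sets, any diagram `x → y → x` forces `x = y`, and each set
`[x,y]` of objects `z` fitting in a diagram `x → z → y` is finite) and one way (in any
diagram `x →f y →g x` one has `x = y` and `f = g = 𝟙 x`). -/
theorem isMobiusCategory_iff_locallyFinite_and_oneWay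
    (C : Type u) [Category.{v} C] (hfin : ∀ x y : C, Finite (x ⟶ y)) :
    IsMobiusCategory C ↔
      (((∀ x y : C, Finite (x ⟶ y)) ∧
        (∀ x y : C, (x ⟶ y) → (y ⟶ x) → x = y) ∧
        (∀ x y : C, {z : C | Nonempty (x ⟶ z) ∧ Nonempty (z ⟶ y)}.Finite)) ∧
       (∀ (x y : C) (f : x ⟶ y) (g : y ⟶ x),
         x = y ∧ HEq f (𝟙 x) ∧ HEq g (𝟙 x))) := by
  constructor
  · intro h
    have hP := h.finite_setOf_proper hfin
    have hanti : ∀ x y : C, (x ⟶ y) → (y ⟶ x) → x = y := fun x y f g => by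
      rcases isIdentityMor_or_of_finite (hP x x) f g with ⟨e, -⟩ | ⟨e, -⟩
      exacts [e, e.symm]
    have hend : ∀ (x : C) (f : x ⟶ x), f = 𝟙 x := fun x f => by
      rcases isIdentityMor_or_of_finite (hP x x) f f with ⟨_, e⟩ | ⟨_, e⟩ <;> exact e
    refine ⟨⟨hfin, hanti, fun x y => ?_⟩, fun x y f g => ?_⟩
    · refine (((hP x y).image CompChain.mid).union (Set.toFinite {x, y})).subset ?_
      rintro z ⟨⟨f⟩, ⟨g⟩⟩
      by_cases hx : z = x
      · exact Or.inr (Or.inl hx)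
      by_cases hy : z = y
      · exact Or.inr (Or.inr hy)
      exact Or.inl ⟨.cons f (.single g), ⟨fun e => hx e.1.symm, fun e => hy e.1⟩, rfl⟩
    · obtain rfl := hanti x y f g
      exact ⟨rfl, heq_of_eq (hend _ f), heq_of_eq (hend _ g)⟩
  · rintro ⟨⟨-, hanti, hint⟩, hone⟩ x y f
    have hP := finite_setOf_proper hfin hanti hint (fun x f => eq_of_heq (hone x x f f).2.1) x y
    refine Set.finite_coe_iff.2 ((hP.union (Set.finite_singleton (.single f))).subset ?_)
    rintro c ⟨hcf, hl | hc⟩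
    · cases c with
      | single g => exact Or.inr (congrArg CompChain.single hcf)
      | cons g c =>
        -- Every chain has positive length, so a `cons` has length at least two.
        cases c <;> simp [CompChain.length] at hl
    · exact Or.inl hc
end

section
/- Let C be a Möbius category and R a commutative ring. A map α in the convolution algebra ([C₁, R], ⋆) is a unit if and only if α(1ₓ) is a unit of R for every object x of C. In particular the map ξ constantly equal to 1 is a unit; its inverse μ (the Möbius function of C) satisfies μ(1ₓ) = 1 for every object x, and for every non-identity morphism f, μ(f) = Σ_{n ≥ 1} (−1)ⁿ·|PDₙf|. -/
/-!
In a Möbius category there are finitely many pairs `(f₁, f₂)` with `f₁ ≫ f₂ = f` (`Fac f`), and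
`𝟙 = f₁ ≫ f₂` forces `f₁` and `f₂` to be identities, since otherwise the alternating chains
`(f₁, f₂, f₁, f₂, …)` are infinitely many proper decompositions of `𝟙`.  Hence `(α ⋆ β)(𝟙) =
α(𝟙) β(𝟙)`, which gives one direction of the criterion.

Conversely, if `α(𝟙 x)` has inverse `u x`, a right inverse `β` of `α` (`rightInv`) is given by a sum
over proper chains of the weight `(-1)ⁿ u α(f₁) u ⋯ u α(fₙ) u`, plus `u` on identities.  Splitting
off the first component of a chain (`sum_proper`) shows that the terms of `(α ⋆ β)(f)` with
`f₁` not an identity cancel against the chain part of `α(𝟙) β(f)` (`conv_rightInv`).  As `β` is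
invertible on identities too, it has a right inverse itself, and associativity (`conv_assoc`) makes
`β` two-sided.  For `α = 1` the weight of a chain is `(-1)ⁿ`, and grouping the chains by length is
the stated formula for `μ`.
-/

open CategoryTheory

universe v u

/-- `C₁`: the set of all morphisms of the category `C`. -/
def Mor (C : Type u) [Category.{v} C] := Σ x y : C, x ⟶ y

/-- The convolution product on `[C₁, R]`:
`(α ⋆ β)(f) = Σ_{(f₁,f₂) : f₂ ∘ f₁ = f} α(f₁)·β(f₂)`. -/
noncomputable def convMor {C : Type u} [Category.{v} C] {R : Type*} [CommRing R]
    (α β : Mor C → R) : Mor C → R :=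
  fun F => ∑ᶠ p : {q : Σ z : C, (F.1 ⟶ z) × (z ⟶ F.2.1) // q.2.1 ≫ q.2.2 = F.2.2},
    α ⟨F.1, p.1.1, p.1.2.1⟩ * β ⟨p.1.1, F.2.1, p.1.2.2⟩

open scoped Classical in
/-- The unit of the convolution algebra: `1` on identity morphisms, `0` elsewhere. -/
noncomputable def deltaMor (C : Type u) [Category.{v} C] (R : Type*) [CommRing R] :
    Mor C → R :=
  fun F => if IsIdentityMor F.2.2 then 1 else 0

namespace MobiusConv

variable {C : Type u} [Category.{v} C]

/-! ### Factorizations and proper chains -/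

/-- Pairs of composable morphisms with composite `f`: the index set of the convolution sum. -/
abbrev Fac {x y : C} (f : x ⟶ y) :=
  {q : Σ z : C, (x ⟶ z) × (z ⟶ y) // q.2.1 ≫ q.2.2 = f}

/-- Chains with composite `f` and no identity component. In contrast to `properDecomps f`, the
chain `(f)` is excluded when `f` is an identity. -/
abbrev PChain {x y : C} (f : x ⟶ y) := {c : CompChain x y // c.comp = f ∧ c.Proper}

lemma finite_pchain (hC : IsMobiusCategory C) {x y : C} (f : x ⟶ y) : Finite (PChain f) := by
  have := hC x y f
  let g : PChain f → properDecomps f := fun c => ⟨c.1, c.2.1, Or.inr c.2.2⟩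
  refine Finite.of_injective g ?_
  intro a b h
  have h : (g a).1 = (g b).1 := by rw [h]
  exact Subtype.ext h

lemma fac_of_fst_id {x y : C} {f : x ⟶ y} (p : Fac f) (hp : IsIdentityMor p.1.2.1) :
    p = ⟨⟨x, 𝟙 x, f⟩, Category.id_comp f⟩ := by
  obtain ⟨⟨z, a, b⟩, h⟩ := p
  obtain ⟨e, he⟩ := hp
  dsimp only at e he h
  subst e
  subst he
  subst h
  simp

lemma fac_of_snd_id {x y : C} {f : x ⟶ y} (p : Fac f) (hp : IsIdentityMor p.1.2.2) :
    p = ⟨⟨y, f, 𝟙 y⟩, Category.comp_id f⟩ := by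
  obtain ⟨⟨z, a, b⟩, h⟩ := p
  obtain ⟨e, he⟩ := hp
  dsimp only at e he h
  subst e
  subst he
  subst h
  simp

lemma isId_id (x : C) : IsIdentityMor (𝟙 x) := ⟨rfl, rfl⟩

lemma finite_fac (hC : IsMobiusCategory C) {x y : C} (f : x ⟶ y) : Finite (Fac f) := by
  have := finite_pchain hC f
  let A : Set (Fac f) := {p | ¬ IsIdentityMor p.1.2.1 ∧ ¬ IsIdentityMor p.1.2.2}
  have hA : Finite A := by
    refine Finite.of_injective (fun p : A =>
      (⟨.cons p.1.1.2.1 (.single p.1.1.2.2), p.1.2, p.2.1, p.2.2⟩ : PChain f)) ?_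
    rintro ⟨⟨⟨z, a, b⟩, h⟩, hp⟩ ⟨⟨⟨z', a', b'⟩, h'⟩, hp'⟩ e
    have e := congrArg Subtype.val e
    simp only [CompChain.cons.injEq] at e
    obtain ⟨rfl, rfl, e'⟩ := e
    simp only [heq_eq_eq, CompChain.single.injEq] at e'
    subst e'
    rfl
  have hA' : A.Finite := hA
  refine Set.finite_univ_iff.mp ((hA'.union (Set.toFinite
    {⟨⟨x, 𝟙 x, f⟩, Category.id_comp f⟩, ⟨⟨y, f, 𝟙 y⟩, Category.comp_id f⟩})).subset ?_)
  intro p _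
  by_cases h1 : IsIdentityMor p.1.2.1
  · exact Or.inr (Or.inl (fac_of_fst_id p h1))
  by_cases h2 : IsIdentityMor p.1.2.2
  · exact Or.inr (Or.inr (fac_of_snd_id p h2))
  exact Or.inl ⟨h1, h2⟩

/-- The alternating chain `(a, b, a, b, …, a, b)` of length `2 * n + 2`. -/
def altChain {x z : C} (a : x ⟶ z) (b : z ⟶ x) : ℕ → CompChain x x
  | 0 => .cons a (.single b)
  | n + 1 => .cons a (.cons b (altChain a b n))

lemma fst_id_of_comp_id (hC : IsMobiusCategory C) {x z : C} (a : x ⟶ z) (b : z ⟶ x)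
    (h : a ≫ b = 𝟙 x) : IsIdentityMor a := by
  by_contra ha
  have hb : ¬ IsIdentityMor b := by
    rintro ⟨e, he⟩
    subst e
    subst he
    exact ha ⟨rfl, by simpa using h⟩
  have hcomp : ∀ n, (altChain a b n).comp = 𝟙 x := by
    intro n
    induction n with
    | zero => exact h
    | succ n ih => simp [altChain, CompChain.comp, ih, h]
  have hproper : ∀ n, (altChain a b n).Proper := by
    intro n
    induction n with
    | zero => exact ⟨ha, hb⟩
    | succ n ih => exact ⟨ha, hb, ih⟩
  have hlen : ∀ n, (altChain a b n).length = 2 * n + 2 := by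
    intro n
    induction n with
    | zero => rfl
    | succ n ih => simp only [altChain, CompChain.length, ih]; ring
  have := finite_pchain hC (𝟙 x)
  refine not_injective_infinite_finite
    (fun n => (⟨altChain a b n, hcomp n, hproper n⟩ : PChain (𝟙 x))) ?_
  intro m n e
  have e := congrArg (fun c : PChain (𝟙 x) => c.1.length) e
  simp only [hlen] at e
  omega

/-! ### The convolution algebra -/

variable {R : Type*} [CommRing R]

lemma conv_id (hC : IsMobiusCategory C) (α β : Mor C → R) (x : C) :
    convMor α β ⟨x, x, 𝟙 x⟩ = α ⟨x, x, 𝟙 x⟩ * β ⟨x, x, 𝟙 x⟩ := by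
  refine finsum_eq_single _ (⟨⟨x, 𝟙 x, 𝟙 x⟩, Category.id_comp _⟩ : Fac (𝟙 x)) ?_
  intro p hp
  exact absurd (fac_of_fst_id p (fst_id_of_comp_id hC _ _ p.2)) hp

lemma apply_id_mul_apply_id (hC : IsMobiusCategory C) {α β : Mor C → R}
    (h : convMor α β = deltaMor C R) (x : C) :
    α ⟨x, x, 𝟙 x⟩ * β ⟨x, x, 𝟙 x⟩ = 1 := by
  rw [← conv_id hC, h]
  exact if_pos (isId_id x)

lemma conv_delta (α : Mor C → R) : convMor α (deltaMor C R) = α := by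
  funext ⟨x, y, f⟩
  refine (finsum_eq_single _ (⟨⟨y, f, 𝟙 y⟩, Category.comp_id _⟩ : Fac f) ?_).trans ?_
  · intro p hp
    have : ¬ IsIdentityMor p.1.2.2 := fun h => hp (fac_of_snd_id p h)
    simp [deltaMor, this]
  · simp [deltaMor, isId_id]

lemma delta_conv (α : Mor C → R) : convMor (deltaMor C R) α = α := by
  funext ⟨x, y, f⟩
  refine (finsum_eq_single _ (⟨⟨x, 𝟙 x, f⟩, Category.id_comp _⟩ : Fac f) ?_).trans ?_
  · intro p hp
    have : ¬ IsIdentityMor p.1.2.1 := fun h => hp (fac_of_fst_id p h)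
    simp [deltaMor, this]
  · simp [deltaMor, isId_id]

/-- Factoring the first or the second factor of `f = f₁ ≫ f₂` once more amounts in both cases to
factoring `f` into three morphisms. -/
def facAssoc {x y : C} (f : x ⟶ y) :
    (Σ p : Fac f, Fac p.1.2.1) ≃ (Σ p : Fac f, Fac p.1.2.2) where
  toFun t := ⟨⟨⟨t.2.1.1, t.2.1.2.1, t.2.1.2.2 ≫ t.1.1.2.2⟩, by
      rw [← Category.assoc, t.2.2, t.1.2]⟩, ⟨⟨t.1.1.1, t.2.1.2.2, t.1.1.2.2⟩, rfl⟩⟩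
  invFun t := ⟨⟨⟨t.2.1.1, t.1.1.2.1 ≫ t.2.1.2.1, t.2.1.2.2⟩, by
      rw [Category.assoc, t.2.2, t.1.2]⟩, ⟨⟨t.1.1.1, t.1.1.2.1, t.2.1.2.1⟩, rfl⟩⟩
  left_inv := by
    rintro ⟨⟨⟨z, a, b⟩, h⟩, ⟨⟨w, c, d⟩, h'⟩⟩
    change w ⟶ z at d
    obtain rfl : c ≫ d = a := h'
    rfl
  right_inv := by
    rintro ⟨⟨⟨z, a, b⟩, h⟩, ⟨⟨w, c, d⟩, h'⟩⟩
    change z ⟶ w at c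
    obtain rfl : c ≫ d = b := h'
    rfl

lemma conv_assoc (hC : IsMobiusCategory C) (α β γ : Mor C → R) :
    convMor (convMor α β) γ = convMor α (convMor β γ) := by
  classical
  have hfin : ∀ {x y : C} (f : x ⟶ y), Finite (Fac f) := finite_fac hC
  let : ∀ {x y : C} (f : x ⟶ y), Fintype (Fac f) := fun f => Fintype.ofFinite _
  have key : ∀ (α β : Mor C → R) {x y : C} (f : x ⟶ y), convMor α β ⟨x, y, f⟩ =
      ∑ p : Fac f, α ⟨x, p.1.1, p.1.2.1⟩ * β ⟨p.1.1, y, p.1.2.2⟩ :=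
    fun α β x y f => finsum_eq_sum_of_fintype _
  funext ⟨x, y, f⟩
  simp only [key, Finset.sum_mul, Finset.mul_sum]
  rw [← Fintype.sum_sigma', ← Fintype.sum_sigma']
  refine Fintype.sum_equiv (facAssoc f) _ _ ?_
  intro t
  exact mul_assoc _ _ _

/-! ### The inverse as a sum over proper chains -/

/-- The weight `(-1)ⁿ u(x₀) α(f₁) u(x₁) ⋯ α(fₙ) u(xₙ)` of a chain. -/
def weight (α : Mor C → R) (u : C → R) : ∀ {x y : C}, CompChain x y → R
  | x, y, .single f => -(u x * α ⟨x, y, f⟩ * u y)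
  | x, _, .cons (y := y) f c => -(u x * α ⟨x, y, f⟩ * weight α u c)

/-- `u` on identities, plus the sum of the weights of all proper chains composing to the given
morphism. -/
noncomputable def rightInv (α : Mor C → R) (u : C → R) : Mor C → R :=
  fun F => deltaMor C R F * u F.1 + ∑ᶠ c : PChain F.2.2, weight α u c.1

lemma rightInv_apply (α : Mor C → R) (u : C → R) {x y : C} (f : x ⟶ y) :
    rightInv α u ⟨x, y, f⟩ =
      deltaMor C R ⟨x, y, f⟩ * u x + ∑ᶠ c : PChain f, weight α u c.1 := rfl

/-- Assembles a proper chain from its first component and either nothing (when the remaining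
factor is an identity) or a proper chain for the remaining factor. -/
def consMap {x y : C} (f : x ⟶ y) :
    (Σ p : {p : Fac f // ¬ IsIdentityMor p.1.2.1},
      (PLift (IsIdentityMor p.1.1.2.2) ⊕ PChain p.1.1.2.2)) → PChain f
  | ⟨p, .inl h⟩ => ⟨.single f, rfl, by
      have h1 := fac_of_snd_id p.1 h.down
      have h2 := p.2
      rw [h1] at h2
      exact h2⟩
  | ⟨p, .inr c⟩ => ⟨.cons p.1.1.2.1 c.1, by
      rw [CompChain.comp, c.2.1, p.1.2], p.2, c.2.2⟩

lemma consMap_bijective {x y : C} (f : x ⟶ y) : Function.Bijective (consMap f) := by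
  constructor
  · rintro ⟨⟨p, hp⟩, h | ⟨c, hc, hc'⟩⟩ ⟨⟨q, hq⟩, k | ⟨d, hd, hd'⟩⟩ e
    · obtain rfl := fac_of_snd_id p h.down
      obtain rfl := fac_of_snd_id q k.down
      obtain rfl : h = k := Subsingleton.elim _ _
      rfl
    · have e := congrArg Subtype.val e
      simp [consMap] at e
    · have e := congrArg Subtype.val e
      simp [consMap] at e
    · have e := congrArg Subtype.val e
      obtain ⟨⟨z, a, b⟩, h⟩ := p
      obtain ⟨⟨z', a', b'⟩, h'⟩ := q
      change CompChain z y at c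
      change CompChain z' y at d
      obtain rfl : c.comp = b := hc
      obtain rfl : d.comp = b' := hd
      simp only [consMap, CompChain.cons.injEq] at e
      obtain ⟨rfl, rfl, e'⟩ := e
      obtain rfl := eq_of_heq e'
      rfl
  · rintro ⟨c, hc, hc'⟩
    cases c with
    | single g =>
      have hg : g = f := hc
      subst hg
      exact ⟨⟨⟨⟨⟨y, g, 𝟙 y⟩, Category.comp_id g⟩, hc'⟩, .inl ⟨isId_id y⟩⟩, rfl⟩
    | cons g c =>
      exact ⟨⟨⟨⟨⟨_, g, c.comp⟩, hc⟩, hc'.1⟩, .inr ⟨c, rfl, hc'.2⟩⟩, rfl⟩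

/-- The recursion for the sum over proper chains obtained by splitting off the first component. -/
lemma sum_proper (hC : IsMobiusCategory C) (α : Mor C → R) (u : C → R) {x y : C} (f : x ⟶ y) :
    ∑ᶠ c : PChain f, weight α u c.1 =
      ∑ᶠ p : {p : Fac f // ¬ IsIdentityMor p.1.2.1},
        -(u x * α ⟨x, p.1.1.1, p.1.1.2.1⟩ * rightInv α u ⟨p.1.1.1, y, p.1.1.2.2⟩) := by
  classical
  have := finite_fac hC f
  let : Fintype {p : Fac f // ¬ IsIdentityMor p.1.2.1} := Fintype.ofFinite _
  have hfin : ∀ {x y : C} (f : x ⟶ y), Finite (PChain f) := finite_pchain hC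
  let : ∀ {x y : C} (f : x ⟶ y), Fintype (PChain f) := fun f => Fintype.ofFinite _
  let : ∀ p : {p : Fac f // ¬ IsIdentityMor p.1.2.1},
    Fintype (PLift (IsIdentityMor p.1.1.2.2)) := fun p => Fintype.ofFinite _
  rw [finsum_eq_sum_of_fintype, finsum_eq_sum_of_fintype,
    ← (consMap_bijective f).sum_comp (fun c : PChain f => weight α u c.1), Fintype.sum_sigma]
  refine Finset.sum_congr rfl fun p _ => ?_
  rw [Fintype.sum_sum_type, rightInv_apply, finsum_eq_sum_of_fintype, mul_add, neg_add, Finset.mul_sum,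
    ← Finset.sum_neg_distrib]
  congr 1
  by_cases h : IsIdentityMor p.1.1.2.2
  · have : Unique (PLift (IsIdentityMor p.1.1.2.2)) := ⟨⟨⟨h⟩⟩, fun _ => rfl⟩
    obtain ⟨p, hp⟩ := p
    obtain rfl := fac_of_snd_id p h
    rw [Fintype.sum_unique]
    simp [consMap, weight, deltaMor, isId_id]
  · have : IsEmpty (PLift (IsIdentityMor p.1.1.2.2)) := ⟨fun k => h k.down⟩
    simp [deltaMor, h]

lemma conv_rightInv (hC : IsMobiusCategory C) (α : Mor C → R) (u : C → R)
    (hu : ∀ x, α ⟨x, x, 𝟙 x⟩ * u x = 1) : convMor α (rightInv α u) = deltaMor C R := by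
  classical
  funext ⟨x, y, f⟩
  have := finite_fac hC f
  let : Fintype (Fac f) := Fintype.ofFinite _
  have hsplit : convMor α (rightInv α u) ⟨x, y, f⟩ = α ⟨x, x, 𝟙 x⟩ * rightInv α u ⟨x, y, f⟩ +
      ∑ p : {p : Fac f // ¬ IsIdentityMor p.1.2.1},
        α ⟨x, p.1.1.1, p.1.1.2.1⟩ * rightInv α u ⟨p.1.1.1, y, p.1.1.2.2⟩ := by
    refine (finsum_eq_sum_of_fintype _).trans ?_
    rw [← Fintype.sum_subtype_add_sum_subtype (fun p : Fac f => IsIdentityMor p.1.2.1)]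
    congr 1
    have : Unique {p : Fac f // IsIdentityMor p.1.2.1} :=
      ⟨⟨⟨⟨⟨x, 𝟙 x, f⟩, Category.id_comp f⟩, isId_id x⟩⟩,
        fun p => Subtype.ext (fac_of_fst_id p.1 p.2)⟩
    rw [Fintype.sum_unique]
    obtain ⟨d, hd⟩ : ∃ d : {p : Fac f // IsIdentityMor p.1.2.1}, d = default := ⟨_, rfl⟩
    rw [← hd, fac_of_fst_id d.1 d.2]
  have hsum := sum_proper hC α u f
  rw [finsum_eq_sum_of_fintype (α := {p : Fac f // ¬ IsIdentityMor p.1.2.1})] at hsum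
  rw [hsplit, rightInv_apply α u f, hsum, Finset.sum_neg_distrib]
  simp only [mul_assoc]
  rw [← Finset.mul_sum]
  linear_combination (deltaMor C R ⟨x, y, f⟩ -
    ∑ p : {p : Fac f // ¬ IsIdentityMor p.1.2.1},
        α ⟨x, p.1.1.1, p.1.1.2.1⟩ * rightInv α u ⟨p.1.1.1, y, p.1.1.2.2⟩) * hu x

/-- `rightInv α u` is itself invertible on identities, so it has a right inverse, which has to
be `α`. -/
lemma rightInv_conv (hC : IsMobiusCategory C) (α : Mor C → R) (u : C → R)
    (hu : ∀ x, α ⟨x, x, 𝟙 x⟩ * u x = 1) : convMor (rightInv α u) α = deltaMor C R := by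
  have h1 := conv_rightInv hC α u hu
  have h2 := conv_rightInv hC (rightInv α u) (fun x => α ⟨x, x, 𝟙 x⟩)
    (fun x => by rw [mul_comm]; exact apply_id_mul_apply_id hC h1 x)
  have h3 : α = rightInv (rightInv α u) (fun x => α ⟨x, x, 𝟙 x⟩) := by
    conv_lhs => rw [← conv_delta α, ← h2, ← conv_assoc hC, h1, delta_conv]
  rwa [← h3] at h2

/-! ### The Möbius function -/

lemma weight_one : ∀ {x y : C} (c : CompChain x y),
    weight (fun _ => (1 : R)) (fun _ => 1) c = (-1) ^ c.length
  | _, _, .single f => by simp [weight, CompChain.length]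
  | _, _, .cons f c => by simp [weight, CompChain.length, weight_one c, pow_succ]

lemma length_pos : ∀ {x y : C} (c : CompChain x y), 1 ≤ c.length
  | _, _, .single _ => le_rfl
  | _, _, .cons _ _ => Nat.le_add_left _ _

lemma proper_of_length_one {x y : C} {f : x ⟶ y} (hf : ¬ IsIdentityMor f) (c : CompChain x y)
    (hc : c.comp = f) (h : c.length = 1) : c.Proper := by
  cases c with
  | single g =>
    have hg : g = f := hc
    subst hg
    exact hf
  | cons g c =>
    have := length_pos c
    simp only [CompChain.length] at h
    omega

/-- For `f` not an identity, `PDₙf` consists of the proper chains of length `n`; the convention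
at `n = 1` makes no difference. -/
def nProperEquiv {x y : C} {f : x ⟶ y} (hf : ¬ IsIdentityMor f) (n : ℕ) :
    nProperDecomps f n ≃ {c : PChain f // c.1.length = n} where
  toFun c := ⟨⟨c.1, c.2.1, c.2.2.2.elim
    (fun h => proper_of_length_one hf c.1 c.2.1 (c.2.2.1.trans h)) id⟩, c.2.2.1⟩
  invFun c := ⟨c.1.1, c.1.2.1, c.2, Or.inr c.1.2.2⟩
  left_inv _ := rfl
  right_inv _ := rfl

lemma mobius_formula (hC : IsMobiusCategory C) {x y : C} (f : x ⟶ y) (hf : ¬ IsIdentityMor f) :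
    rightInv (fun _ => (1 : R)) (fun _ => 1) ⟨x, y, f⟩ =
      ∑ᶠ n ∈ Set.Ici 1, (-1 : R) ^ n * (Nat.card (nProperDecomps f n) : R) := by
  classical
  have := finite_pchain hC f
  let : Fintype (PChain f) := Fintype.ofFinite _
  have hcard : ∀ n, Nat.card (nProperDecomps f n) =
      (Finset.univ.filter fun c : PChain f => c.1.length = n).card := fun n => by
    rw [Nat.card_congr (nProperEquiv hf n), Nat.card_eq_fintype_card, Fintype.card_subtype]
  simp only [rightInv, deltaMor, hf, if_false, zero_mul, zero_add, weight_one, hcard]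
  rw [finsum_eq_sum_of_fintype]
  rw [finsum_mem_eq_sum_of_inter_support_eq (t := Finset.univ.image fun c : PChain f => c.1.length)]
  · rw [← Finset.sum_fiberwise_of_maps_to (s := Finset.univ)
      (t := Finset.univ.image fun c : PChain f => c.1.length) (g := fun c : PChain f => c.1.length)
      (fun c hc => Finset.mem_image_of_mem _ hc)]
    refine Finset.sum_congr rfl fun n _ => ?_
    rw [Finset.sum_congr rfl (g := fun _ => (-1 : R) ^ n)
      (fun c hc => by rw [(Finset.mem_filter.mp hc).2])]
    rw [Finset.sum_const, nsmul_eq_mul, mul_comm]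
  · ext n
    simp only [Set.mem_inter_iff, Set.mem_Ici, Function.mem_support, Finset.coe_image,
      Finset.coe_univ, Set.image_univ, Set.mem_range]
    refine and_congr_left fun hn => ⟨fun _ => ?_, ?_⟩
    · by_contra hne
      refine hn ?_
      rw [Finset.filter_false_of_mem (fun c _ hc => hne ⟨c, hc⟩)]
      simp
    · rintro ⟨c, rfl⟩
      exact length_pos c.1

end MobiusConv

/-- **Units of the convolution algebra of a Möbius category and the Möbius function.**
For a Möbius category `C` and a commutative ring `R`, a map `α ∈ [C₁, R]` is a unit for
convolution iff `α(𝟙 x)` is a unit of `R` for every object `x`.  In particular the map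
`ξ` constantly equal to `1` is a unit, and its inverse `μ` satisfies `μ(𝟙 x) = 1` and,
for every non-identity morphism `f`, `μ(f) = Σ_{n ≥ 1} (−1)ⁿ·|PDₙf|`. -/
theorem convolution_unit_iff_and_mobius {C : Type u} [Category.{v} C]
    {R : Type*} [CommRing R] (hC : IsMobiusCategory C) :
    (∀ α : Mor C → R,
      (∃ β : Mor C → R, convMor α β = deltaMor C R ∧ convMor β α = deltaMor C R) ↔
        ∀ x : C, IsUnit (α ⟨x, x, 𝟙 x⟩)) ∧
    ∃ μ : Mor C → R,
      convMor (fun _ => (1 : R)) μ = deltaMor C R ∧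
      convMor μ (fun _ => (1 : R)) = deltaMor C R ∧
      (∀ x : C, μ ⟨x, x, 𝟙 x⟩ = 1) ∧
      ∀ (x y : C) (f : x ⟶ y), ¬IsIdentityMor f →
        μ ⟨x, y, f⟩ = ∑ᶠ n ∈ Set.Ici 1,
          (-1 : R) ^ n * (Nat.card (nProperDecomps f n) : R) := by
  have hinv : ∀ (α : Mor C → R) (u : C → R), (∀ x, α ⟨x, x, 𝟙 x⟩ * u x = 1) →
      convMor α (MobiusConv.rightInv α u) = deltaMor C R ∧
        convMor (MobiusConv.rightInv α u) α = deltaMor C R := fun α u hu =>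
    ⟨MobiusConv.conv_rightInv hC α u hu, MobiusConv.rightInv_conv hC α u hu⟩
  refine ⟨fun α => ⟨?_, fun h => ?_⟩, ?_⟩
  · rintro ⟨β, h, -⟩ x
    exact IsUnit.of_mul_eq_one _ (MobiusConv.apply_id_mul_apply_id hC h x)
  · choose u hu using fun x => (h x).exists_right_inv
    exact ⟨_, hinv α u hu⟩
  · have h := hinv (fun _ => 1) (fun _ => 1) (fun _ => one_mul 1)
    refine ⟨_, h.1, h.2, fun x => ?_, fun x y f hf => MobiusConv.mobius_formula hC f hf⟩
    simpa using MobiusConv.apply_id_mul_apply_id hC h.1 x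
end

section
/- Let C be a Möbius category. The relation on the set C₁ of morphisms of C defined by f ≤ g if and only if there exists a morphism h with g = h∘f is a partial order on C₁. -/
/-!
Reflexivity and transitivity hold in any category. For antisymmetry, let `f ≫ h ≫ k = f`; it
suffices that `h` is an identity. Put `e = h ≫ k`. If `e` were not an identity, then neither would
be `f`, and `(f, e, …, e)` would be proper decompositions of `f` of unbounded length
(`isIdentityMor_of_comp_eq_self`). So `h ≫ k = 𝟙`. If `h` were not an identity, then neither would
be `k`, and `(h, k, h, k, …, h, k)` would be proper decompositions of `𝟙` of unbounded length
(`isIdentityMor_of_comp_eq_id`). Both contradict finiteness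
(`IsMobiusCategory.false_of_proper_seq`).
-/

open CategoryTheory

universe v u

/-- The divisibility relation on morphisms: `f ≤ g` iff `g = h ∘ f` for some `h`. -/
def morLE {C : Type u} [Category.{v} C] (F G : Mor C) : Prop :=
  ∃ (w : C) (h : F.2.1 ⟶ w), G = ⟨F.1, w, F.2.2 ≫ h⟩

theorem IsMobiusCategory.false_of_proper_seq {C : Type u} [Category.{v} C]
    (hC : IsMobiusCategory C) {x y : C} (f : x ⟶ y) (c : ℕ → CompChain x y)
    (hcomp : ∀ n, (c n).comp = f) (hproper : ∀ n, (c n).Proper)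
    (hlen : Function.Injective fun n => (c n).length) : False := by
  have : Finite (properDecomps f) := hC x y f
  let d : ℕ → properDecomps f := fun n => ⟨c n, hcomp n, Or.inr (hproper n)⟩
  refine not_injective_infinite_finite d fun m n hmn => ?_
  exact hlen (congrArg (fun d : properDecomps f => d.1.length) hmn)

theorem isIdentityMor_of_comp_eq_self {C : Type u} [Category.{v} C]
    (hC : IsMobiusCategory C) {x y : C} {f : x ⟶ y} {e : y ⟶ y} (hfe : f ≫ e = f) :
    IsIdentityMor e := by
  by_contra he
  have hf : ¬ IsIdentityMor f := by
    rintro ⟨rfl, rfl⟩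
    exact he ⟨rfl, by simpa using hfe⟩
  -- `c n` is the chain `(e, …, e)` with `n + 1` entries
  let c : ℕ → CompChain y y := fun n =>
    Nat.rec (CompChain.single e) (fun _ d => CompChain.cons e d) n
  have hcomp : ∀ n, f ≫ (c n).comp = f := by
    intro n
    induction n with
    | zero => exact hfe
    | succ n ih =>
      change f ≫ e ≫ (c n).comp = f
      rw [← Category.assoc, hfe, ih]
  have hproper : ∀ n, (c n).Proper := by
    intro n
    induction n with
    | zero => exact he
    | succ n ih => exact ⟨he, ih⟩
  have hlen : ∀ n, (c n).length = n + 1 := by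
    intro n
    induction n with
    | zero => rfl
    | succ n ih => exact congrArg (· + 1) ih
  refine hC.false_of_proper_seq f (fun n => CompChain.cons f (c n)) hcomp
    (fun n => ⟨hf, hproper n⟩) fun m n hmn => ?_
  have hmn' : (c m).length + 1 = (c n).length + 1 := hmn
  rw [hlen, hlen] at hmn'
  omega

theorem isIdentityMor_of_comp_eq_id {C : Type u} [Category.{v} C]
    (hC : IsMobiusCategory C) {y w : C} {h : y ⟶ w} {k : w ⟶ y} (hhk : h ≫ k = 𝟙 y) :
    IsIdentityMor h := by
  by_contra hh
  have hk : ¬ IsIdentityMor k := by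
    rintro ⟨rfl, rfl⟩
    exact hh ⟨rfl, by simpa using hhk⟩
  -- `c n` is the chain `(h, k, …, h, k)` with `2 * n + 2` entries
  let c : ℕ → CompChain y y := fun n =>
    Nat.rec (CompChain.cons h (CompChain.single k))
      (fun _ d => CompChain.cons h (CompChain.cons k d)) n
  have hlen : ∀ n, (c n).length = 2 * n + 2 := by
    intro n
    induction n with
    | zero => rfl
    | succ n ih =>
      change (c n).length + 1 + 1 = _
      omega
  refine hC.false_of_proper_seq (𝟙 y) c (fun n => ?_) (fun n => ?_) fun m n hmn => ?_
  · induction n with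
    | zero => exact hhk
    | succ n ih =>
      change h ≫ k ≫ (c n).comp = 𝟙 y
      rw [ih, Category.comp_id, hhk]
  · induction n with
    | zero => exact ⟨hh, hk⟩
    | succ n ih => exact ⟨hh, hk, ih⟩
  · have hmn' : (c m).length = (c n).length := hmn
    rw [hlen, hlen] at hmn'
    omega

/-- **The divisibility order on the morphisms of a Möbius category.**
For a Möbius category `C`, the relation `f ≤ g ↔ ∃ h, g = h ∘ f` is a partial order on
the set `C₁` of morphisms of `C`. -/
theorem morLE_isPartialOrder (C : Type u) [Category.{v} C]
    (hC : IsMobiusCategory C) :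
    IsPartialOrder (Mor C) morLE := by
  refine { refl := ?_, trans := ?_, antisymm := ?_ }
  · rintro ⟨x, y, f⟩
    exact ⟨y, 𝟙 y, by simp; rfl⟩
  · rintro ⟨x, y, f⟩ _ _ ⟨w, h, rfl⟩ ⟨z, k, rfl⟩
    exact ⟨z, h ≫ k, by simp; rfl⟩
  · rintro ⟨x, y, f⟩ _ ⟨w, h, rfl⟩ ⟨y', k, hF⟩
    obtain ⟨-, hF⟩ := Sigma.mk.inj hF
    obtain ⟨rfl, hF⟩ := Sigma.mk.inj (eq_of_heq hF)
    have hfhk : f ≫ h ≫ k = f := by simpa using (eq_of_heq hF).symm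
    obtain ⟨_, he⟩ := isIdentityMor_of_comp_eq_self hC hfhk
    obtain ⟨hyw, hh⟩ := isIdentityMor_of_comp_eq_id hC (he.trans (eqToHom_refl _ _))
    dsimp only at hyw h
    subst hyw
    rw [hh]
    simp
    rfl
end

section
/- Let C be a right-cancellative Möbius category (g∘f = h∘f implies g = h) and R a commutative ring, and order the morphisms of C by f ≤ g if and only if there exists h with g = h∘f. Then the convolution algebra ([C₁, R], ⋆) is isomorphic, as an R-algebra, to the subalgebra of the incidence algebra of the poset (C₁, ≤) consisting of those maps α satisfying α[f, h∘f] = α[1, h] for all composable morphisms f, h (where 1 denotes the identity at the source of h); an isomorphism sends β ∈ [C₁, R] to the map β̂ given by β̂[f, h∘f] = β(h). -/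
/-!
By right cancellativity, `G = h ∘ F` determines `h`, so `β̂[F, h ∘ F] = β(h)`, extended by zero off
the relation `F ≤ G`, is a well-defined function `betaHat β` (`betaHat_comp`). Everything but
multiplicativity and unitality is then immediate: a function `u` with `u[f, h ∘ f] = u[1, h]` is
`β̂` for `β(h) = u[1, h]`. For the product, the point is that `(a, b) ↦ a ∘ f` is a bijection from
the 2-decompositions `b ∘ a = h` onto the interval `[f, h ∘ f]` (`decompToInterval_injective`,
`range_decompToInterval`), so the two convolution sums agree term by term. For the unit, `h ∘ f = f`
forces `h` to be an identity.
-/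

open CategoryTheory

universe v u

/-- The convolution product of the incidence algebra of the poset `(C₁, ≤)`:
`(u ⋆ v)[F,G] = Σ_{F ≤ H ≤ G} u[F,H]·v[H,G]`. -/
noncomputable def incConv {C : Type u} [Category.{v} C] {R : Type*} [CommRing R]
    (u v : Mor C → Mor C → R) : Mor C → Mor C → R :=
  fun F G => ∑ᶠ H ∈ {H : Mor C | morLE F H ∧ morLE H G}, u F H * v H G

open scoped Classical in
/-- The unit of the incidence algebra of the poset `(C₁, ≤)`. -/
noncomputable def incOne (C : Type u) [Category.{v} C] (R : Type*) [CommRing R] :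
    Mor C → Mor C → R :=
  fun F G => if F = G then 1 else 0

namespace MobiusIso

variable {C : Type u} [Category.{v} C] {R : Type*} [CommRing R]

theorem morLE_trans {F G H : Mor C} (h₁ : morLE F G) (h₂ : morLE G H) : morLE F H := by
  obtain ⟨w, a, rfl⟩ := h₁
  obtain ⟨z, b, rfl⟩ := h₂
  exact ⟨z, a ≫ b, congrArg (fun k => (⟨F.1, z, k⟩ : Mor C)) (Category.assoc _ _ _)⟩

/-- The quotient of `G` by `F` is unique, including its target object. -/
theorem quotient_unique
    (hrc : ∀ {x y z : C} (f : x ⟶ y) (g h : y ⟶ z), f ≫ g = f ≫ h → g = h)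
    {x y w w' : C} (f : x ⟶ y) (h : y ⟶ w) (h' : y ⟶ w')
    (e : (⟨x, w, f ≫ h⟩ : Mor C) = ⟨x, w', f ≫ h'⟩) :
    (⟨w, h⟩ : Σ z : C, y ⟶ z) = ⟨w', h'⟩ := by
  have e' := eq_of_heq (Sigma.mk.inj e).2
  obtain ⟨rfl, e''⟩ := Sigma.mk.inj e'
  rw [hrc f h h' (eq_of_heq e'')]

open scoped Classical in
/-- The function `β̂` on pairs of morphisms: `β̂[F, G] = β(h)` for a chosen `h` with `G = h ∘ F`,
and `0` when `F ≤ G` fails. -/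
noncomputable def betaHat (β : Mor C → R) (F G : Mor C) : R :=
  if h : morLE F G then β ⟨F.2.1, h.choose, h.choose_spec.choose⟩ else 0

theorem betaHat_of_not_le (β : Mor C → R) {F G : Mor C} (h : ¬morLE F G) :
    betaHat β F G = 0 := dif_neg h

theorem betaHat_comp
    (hrc : ∀ {x y z : C} (f : x ⟶ y) (g h : y ⟶ z), f ≫ g = f ≫ h → g = h)
    (β : Mor C → R) {x y w : C} (f : x ⟶ y) (h : y ⟶ w) :
    betaHat β ⟨x, y, f⟩ ⟨x, w, f ≫ h⟩ = β ⟨y, w, h⟩ := by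
  have hle : morLE (⟨x, y, f⟩ : Mor C) ⟨x, w, f ≫ h⟩ := ⟨w, h, rfl⟩
  have e := quotient_unique hrc f h _ hle.choose_spec.choose_spec
  refine (dif_pos hle).trans ?_
  exact congrArg (fun q : Σ z : C, y ⟶ z => β ⟨y, q.1, q.2⟩) e.symm

/-- The map sending a 2-decomposition `h = b ∘ a` to the element `a ∘ f` of the interval
`[f, h ∘ f]`. -/
def decompToInterval {x y w : C} (f : x ⟶ y) (h : y ⟶ w)
    (p : {q : Σ z : C, (y ⟶ z) × (z ⟶ w) // q.2.1 ≫ q.2.2 = h}) : Mor C :=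
  ⟨x, p.1.1, f ≫ p.1.2.1⟩

theorem decompToInterval_injective
    (hrc : ∀ {x y z : C} (f : x ⟶ y) (g h : y ⟶ z), f ≫ g = f ≫ h → g = h)
    {x y w : C} (f : x ⟶ y) (h : y ⟶ w) :
    Function.Injective (decompToInterval f h) := by
  rintro ⟨⟨z, a, b⟩, hp⟩ ⟨⟨z', a', b'⟩, hq⟩ e
  obtain ⟨rfl, e'⟩ := Sigma.mk.inj (quotient_unique hrc f a a' e)
  obtain rfl := eq_of_heq e'
  -- `b` and `b'` are both quotients of `h` by `a`.
  obtain rfl := hrc a b b' (hp.trans hq.symm)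
  rfl

theorem range_decompToInterval
    (hrc : ∀ {x y z : C} (f : x ⟶ y) (g h : y ⟶ z), f ≫ g = f ≫ h → g = h)
    {x y w : C} (f : x ⟶ y) (h : y ⟶ w) :
    Set.range (decompToInterval f h) =
      {H : Mor C | morLE ⟨x, y, f⟩ H ∧ morLE H ⟨x, w, f ≫ h⟩} := by
  ext H
  constructor
  · rintro ⟨⟨⟨z, a, b⟩, rfl⟩, rfl⟩
    exact ⟨⟨z, a, rfl⟩, ⟨w, b,
      congrArg (fun k => (⟨x, w, k⟩ : Mor C)) (Category.assoc f a b).symm⟩⟩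
  · rintro ⟨⟨z, a, rfl⟩, ⟨w', b, e⟩⟩
    have e' : (⟨x, w, f ≫ h⟩ : Mor C) = ⟨x, w', f ≫ a ≫ b⟩ :=
      e.trans (congrArg (fun k => (⟨x, w', k⟩ : Mor C)) (Category.assoc f a b))
    obtain ⟨rfl, e''⟩ := Sigma.mk.inj (quotient_unique hrc f h _ e')
    exact ⟨⟨⟨z, a, b⟩, (eq_of_heq e'').symm⟩, rfl⟩

theorem betaHat_convMor
    (hrc : ∀ {x y z : C} (f : x ⟶ y) (g h : y ⟶ z), f ≫ g = f ≫ h → g = h)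
    (β₁ β₂ : Mor C → R) :
    betaHat (convMor β₁ β₂) = incConv (betaHat β₁) (betaHat β₂) := by
  funext F G
  by_cases hle : morLE F G
  · obtain ⟨x, y, f⟩ := F
    obtain ⟨w, h, rfl⟩ := hle
    dsimp only at h ⊢
    rw [betaHat_comp hrc]
    unfold incConv convMor
    rw [← range_decompToInterval hrc, finsum_mem_range (decompToInterval_injective hrc f h)]
    refine finsum_congr ?_
    rintro ⟨⟨z, a, b⟩, hab⟩
    have e := betaHat_comp hrc β₂ (f ≫ a) b
    have hab' : a ≫ b = h := hab
    rw [Category.assoc, hab'] at e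
    exact (congrArg₂ (· * ·) (betaHat_comp hrc β₁ f a) e).symm
  · rw [betaHat_of_not_le _ hle, incConv]
    refine (finsum_mem_eq_zero_of_forall_eq_zero ?_).symm
    rintro H ⟨h₁, h₂⟩
    exact (hle (morLE_trans h₁ h₂)).elim

theorem betaHat_deltaMor
    (hrc : ∀ {x y z : C} (f : x ⟶ y) (g h : y ⟶ z), f ≫ g = f ≫ h → g = h) :
    betaHat (deltaMor C R) = incOne C R := by
  classical
  funext F G
  by_cases hle : morLE F G
  · obtain ⟨x, y, f⟩ := F
    obtain ⟨w, h, rfl⟩ := hle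
    dsimp only at h ⊢
    rw [betaHat_comp hrc]
    unfold deltaMor incOne
    refine if_congr ⟨?_, fun e => ?_⟩ rfl rfl
    · rintro ⟨hyw, e⟩
      dsimp only at hyw e
      subst hyw
      subst e
      exact congrArg (fun k => (⟨x, y, k⟩ : Mor C)) (Category.comp_id f).symm
    · have e' : (⟨x, y, f ≫ 𝟙 y⟩ : Mor C) = ⟨x, w, f ≫ h⟩ :=
        (congrArg (fun k => (⟨x, y, k⟩ : Mor C)) (Category.comp_id f)).trans e
      obtain ⟨rfl, e''⟩ := Sigma.mk.inj (quotient_unique hrc f (𝟙 y) h e')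
      exact ⟨rfl, (eq_of_heq e'').symm⟩
  · rw [betaHat_of_not_le _ hle, incOne, if_neg]
    rintro rfl
    exact hle ⟨F.2.1, 𝟙 _, by rw [Category.comp_id]; rfl⟩

end MobiusIso

open MobiusIso

/-- **The convolution algebra of a right-cancellative Möbius category as a reduced
incidence algebra.**  For a right-cancellative Möbius category `C` and a commutative
ring `R`, the map `β ↦ β̂`, `β̂[f, h∘f] = β(h)`, is an injective `R`-linear,
multiplicative and unital map from `[C₁, R]` onto the subalgebra of the incidence
algebra of the poset `(C₁, ≤)` consisting of the maps `α` supported on `≤` satisfying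
`α[f, h∘f] = α[1, h]` for all composable `f`, `h`. -/
theorem convolution_algebra_iso_reduced_incidence
    {C : Type u} [Category.{v} C] {R : Type*} [CommRing R]
    (hC : IsMobiusCategory C)
    (hrc : ∀ {x y z : C} (f : x ⟶ y) (g h : y ⟶ z), f ≫ g = f ≫ h → g = h) :
    ∃ Φ : (Mor C → R) → (Mor C → Mor C → R),
      Function.Injective Φ ∧
      Set.range Φ = {u : Mor C → Mor C → R |
        (∀ F G : Mor C, ¬morLE F G → u F G = 0) ∧
        ∀ (x y w : C) (f : x ⟶ y) (h : y ⟶ w),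
          u ⟨x, y, f⟩ ⟨x, w, f ≫ h⟩ = u ⟨y, y, 𝟙 y⟩ ⟨y, w, h⟩} ∧
      (∀ β₁ β₂ : Mor C → R, Φ (β₁ + β₂) = Φ β₁ + Φ β₂) ∧
      (∀ (c : R) (β : Mor C → R), Φ (c • β) = c • Φ β) ∧
      (∀ β₁ β₂ : Mor C → R, Φ (convMor β₁ β₂) = incConv (Φ β₁) (Φ β₂)) ∧
      Φ (deltaMor C R) = incOne C R ∧
      ∀ (β : Mor C → R) (x y w : C) (f : x ⟶ y) (h : y ⟶ w),
        Φ β ⟨x, y, f⟩ ⟨x, w, f ≫ h⟩ = β ⟨y, w, h⟩ := by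
  -- `β(h)` is recovered from `β̂` as `β̂[1, h]`.
  have hone (β : Mor C → R) {y w : C} (h : y ⟶ w) :
      betaHat β ⟨y, y, 𝟙 y⟩ ⟨y, w, h⟩ = β ⟨y, w, h⟩ := by
    simpa using betaHat_comp hrc β (𝟙 y) h
  refine ⟨betaHat, ?_, ?_, ?_, ?_, betaHat_convMor hrc, betaHat_deltaMor hrc,
    fun β x y w f h => betaHat_comp hrc β f h⟩
  · intro β₁ β₂ e
    funext ⟨y, w, h⟩
    rw [← hone β₁, e, hone β₂]
  · ext u
    constructor
    · rintro ⟨β, rfl⟩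
      exact ⟨fun F G h => betaHat_of_not_le β h,
        fun x y w f h => by rw [betaHat_comp hrc, hone]⟩
    · rintro ⟨hsupp, hinv⟩
      refine ⟨fun H => u ⟨H.1, H.1, 𝟙 H.1⟩ H, ?_⟩
      funext F G
      by_cases hle : morLE F G
      · obtain ⟨x, y, f⟩ := F
        obtain ⟨w, h, rfl⟩ := hle
        dsimp only at h ⊢
        rw [betaHat_comp hrc, hinv]
      · rw [betaHat_of_not_le _ hle, hsupp F G hle]
  · intro β₁ β₂
    funext F G
    by_cases hle : morLE F G
    · obtain ⟨x, y, f⟩ := F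
      obtain ⟨w, h, rfl⟩ := hle
      exact (betaHat_comp hrc _ f h).trans
        (congrArg₂ (· + ·) (betaHat_comp hrc β₁ f h) (betaHat_comp hrc β₂ f h)).symm
    · simp [betaHat, hle]
  · intro c β
    funext F G
    by_cases hle : morLE F G
    · obtain ⟨x, y, f⟩ := F
      obtain ⟨w, h, rfl⟩ := hle
      exact (betaHat_comp hrc _ f h).trans (congrArg (c • ·) (betaHat_comp hrc β f h)).symm
    · simp [betaHat, hle]
end
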